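/- Let Ω ⊂ ℝ^d (d ≥ 2) be a domain and let L u = div(A Du) + b·Du + c u, where A satisfies λ|ξ|² ≤ a^{ij}(x)ξ^i ξ^j and |a^{ij}(x)ξ^i η^j| ≤ Λ|ξ||η| for all x ∈ Ω, ξ, η ∈ ℝ^d. Assume A ∈ C^α(Ω), b ∈ L^p(Ω) with p ≥ d/(1−α), c ∈ C^α(Ω), and f ∈ C^α(Ω) for some α ∈ (0,1). Let u ∈ C¹_loc(Ω) be a weak solution of L u = f in Ω with Du(x^o) = 0 at some x^o ∈ Ω. Then the second derivative D²u(x^o) exists and there is a constant C such that |Du(x) − D²u(x^o)(x − x^o)| ≤ C |x − x^o|^{1+α} for all x sufficiently close to x^o; that is, u enjoys C^{2,α} regularity at the critical point x^o. -/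

import Mathlib

open MeasureTheory Metric Filter
open scoped RealInnerProductSpace ENNReal Topology

noncomputable section

/-- Euclidean space `ℝ^d`. -/
abbrev Euc (d : ℕ) := EuclideanSpace ℝ (Fin d)

/-- The mean oscillation function `ω_f(r) = sup_{x ∈ Ω} ⨍_{Ω ∩ B_r(x)} |f - (f)_{Ω ∩ B_r(x)}|`. -/
noncomputable def meanOsc {d : ℕ} {F : Type*} [NormedAddCommGroup F] [NormedSpace ℝ F]
    (Ω : Set (Euc d)) (f : Euc d → F) (r : ℝ) : ℝ :=
  ⨆ x : Ω, ⨍ y in Ω ∩ ball (x : Euc d) r, ‖f y - ⨍ z in Ω ∩ ball (x : Euc d) r, f z‖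

/-- `f` has Dini mean oscillation on `Ω`: `∫₀¹ ω_f(r)/r dr < ∞`. -/
def HasDMO {d : ℕ} {F : Type*} [NormedAddCommGroup F] [NormedSpace ℝ F]
    (Ω : Set (Euc d)) (f : Euc d → F) : Prop :=
  IntegrableOn (fun r => meanOsc Ω f r / r) (Set.Ioc (0 : ℝ) 1)

/-- A modulus of continuity: nonnegative, nondecreasing on `(0,∞)`, tending to `0` at `0⁺`. -/
def IsModulus (ρ : ℝ → ℝ) : Prop :=
  (∀ t, 0 ≤ ρ t) ∧ MonotoneOn ρ (Set.Ioi 0) ∧ Tendsto ρ (𝓝[>] 0) (𝓝 0)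

/-- The sup norm `‖g‖_{L^∞(s)}` (for continuous `g`). -/
noncomputable def supNorm {d : ℕ} {F : Type*} [NormedAddCommGroup F]
    (g : Euc d → F) (s : Set (Euc d)) : ℝ :=
  ⨆ x : s, ‖g (x : Euc d)‖

/-- `sup_{x ∈ Ω} ∫_{Ω ∩ B_r(x)} g`. -/
noncomputable def supInt {d : ℕ} (Ω : Set (Euc d)) (g : Euc d → ℝ) (r : ℝ) : ℝ :=
  ⨆ x : Ω, ∫ y in Ω ∩ ball (x : Euc d) r, g y

/-- The Hessian `D²u(x)` of `u` at `x`, as a continuous bilinear form. -/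
noncomputable def hess {d : ℕ} (u : Euc d → ℝ) (x : Euc d) :
    Euc d →L[ℝ] Euc d →L[ℝ] ℝ :=
  fderiv ℝ (fun y => fderiv ℝ u y) x

/-- The Dini sum `ω̃(t) = Σ_{i≥1} κ^{iβ} (ω(κ^{-i}t) if κ^{-i}t ≤ 1, else ω(1))`. -/
noncomputable def diniSum (ω : ℝ → ℝ) (κ β : ℝ) (t : ℝ) : ℝ :=
  ∑' i : ℕ, (κ ^ β) ^ (i + 1) *
    (if t / κ ^ (i + 1) ≤ 1 then ω (t / κ ^ (i + 1)) else ω 1)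

/-- The norm `|𝒮| = sup_{|ξ|=1} |𝒮(ξ,ξ,ξ)|` of a (0,3)-tensor. -/
noncomputable def tnorm {d : ℕ} (S : Euc d →L[ℝ] Euc d →L[ℝ] Euc d →L[ℝ] ℝ) : ℝ :=
  ⨆ ξ : sphere (0 : Euc d) 1, |S ξ.1 ξ.1 ξ.1|

/-- A fully symmetric (0,3)-tensor. -/
def Sym3 {d : ℕ} (S : Euc d →L[ℝ] Euc d →L[ℝ] Euc d →L[ℝ] ℝ) : Prop :=
  ∀ x y z : Euc d, S x y z = S y x z ∧ S x y z = S x z y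

/-- `u` is a weak solution of `div(A Du) + b·Du + c u = f` in `Ω`. -/
def IsWeakSolDiv {d : ℕ} (Ω : Set (Euc d)) (A : Euc d → Euc d →L[ℝ] Euc d)
    (b : Euc d → Euc d) (c f u : Euc d → ℝ) : Prop :=
  ∀ φ : Euc d → ℝ, ContDiff ℝ (⊤ : ℕ∞) φ → HasCompactSupport φ → tsupport φ ⊆ Ω →
    ∫ x in Ω, (⟪b x, gradient u x⟫ + c x * u x - f x) * φ x
      = ∫ x in Ω, ⟪A x (gradient u x), gradient φ x⟫

/-- Hölder continuity with exponent `α` on `s`. -/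
def HolderOnE {d : ℕ} {F : Type*} [NormedAddCommGroup F]
    (g : Euc d → F) (α : ℝ) (s : Set (Euc d)) : Prop :=
  ∃ M : ℝ, ∀ x ∈ s, ∀ y ∈ s, ‖g x - g y‖ ≤ M * ‖x - y‖ ^ α

/-- `v` is the weak gradient of `u` on `s`. -/
def IsWeakGrad {d : ℕ} (s : Set (Euc d)) (u : Euc d → ℝ) (v : Euc d → Euc d) : Prop :=
  ∀ φ : Euc d → ℝ, ContDiff ℝ (⊤ : ℕ∞) φ → HasCompactSupport φ → tsupport φ ⊆ s →
    ∫ x in s, u x • gradient φ x = - ∫ x in s, φ x • v x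

/-- `u ∈ W^{1,p}₀(s)`, with weak gradient `v`: `u, v ∈ L^p`, `v` is the weak gradient of `u`,
and `u` is approximable by smooth compactly supported functions in the `W^{1,p}` norm. -/
def MemW1p0 {d : ℕ} (p : ℝ) (s : Set (Euc d)) (u : Euc d → ℝ) (v : Euc d → Euc d) : Prop :=
  IsWeakGrad s u v ∧
  MemLp u (ENNReal.ofReal p) (volume.restrict s) ∧
  MemLp v (ENNReal.ofReal p) (volume.restrict s) ∧
  ∀ ε : ℝ, 0 < ε → ∃ φ : Euc d → ℝ, ContDiff ℝ (⊤ : ℕ∞) φ ∧ HasCompactSupport φ ∧ tsupport φ ⊆ s ∧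
    eLpNorm (fun x => u x - φ x) (ENNReal.ofReal p) (volume.restrict s) < ENNReal.ofReal ε ∧
    eLpNorm (fun x => v x - gradient φ x) (ENNReal.ofReal p) (volume.restrict s) < ENNReal.ofReal ε

/-- The quantity `φ(r) = (1/r) inf_{l ∈ 𝔄} (⨍_{B_r} |Du - l|^{1/2})²`, the infimum being over
affine maps `l(x) = Sx + p` with `S` symmetric. -/
noncomputable def phiFun {d : ℕ} (u : Euc d → ℝ) (r : ℝ) : ℝ :=
  (1 / r) * ⨅ S : {S : Euc d →L[ℝ] Euc d // ∀ ξ η, ⟪S ξ, η⟫ = ⟪ξ, S η⟫}, ⨅ p : Euc d,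
    (⨍ x in ball (0 : Euc d) r, Real.sqrt ‖gradient u x - S.1 x - p‖) ^ 2

end

/-
Freeze the leading coefficient at a point `y` and let `Q` be its symmetric part there. For the
kernel `ψ(z) = χ(⟪Q⁻¹ z, z⟫)` and the field `Φ(z) = χ(⟪Q⁻¹ z, z⟫) Q⁻¹ z` one has
`DΦ(z) (Q v) = ψ(z) v + ⟪v, z⟫ ∇ψ(z)`, so an integration by parts identifies the derivative in
`t` of the average `J t y = ∫ ψ(z) Du(y + t z) dz` with `-t⁻¹ ∫ DΦ(z) (Q Du(y + t z)) dz`, which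
is the equation tested against `Φ`. It is therefore `O(t ^ (α - 1) (sup |Du| + t))`: the Hölder
modulus of `A` and the decay of `‖b‖_{L¹}` on balls both contribute `t ^ α sup |Du|`, and the
zeroth-order terms only contribute their oscillation `t ^ α`, times `t`, because `∫ Φ = 0`.

Integrated down to `t = 0`, this bounds `J t y - (∫ ψ) Du(y)`. Since `Du(x₀) = 0`, an absorption
argument gives `|Du(x)| ≤ a |x - x₀|`, and then `sup |Du| = O(t)` on the ball of radius `3 t`
about `x₀`, so that this difference is `O(t ^ (1 + α))`. The linear map in the expansion of `Du`
at `x₀` is obtained by integrating the derivative in `t` of `J t (x₀ + h) - J t x₀` from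
`t = |h|` to a fixed scale: its part linear in `h` is `O(t ^ (α - 1) |h|)`, integrable down to
`0`, and the remainder `O(t ^ (α - 2) |h| ^ 2)` contributes `O(|h| ^ (1 + α))`.
-/

section Gradient

variable {E : Type*} [NormedAddCommGroup E] [InnerProductSpace ℝ E] [CompleteSpace E]

lemma continuous_gradient_of_contDiff {κ : E → ℝ} (hκ : ContDiff ℝ 1 κ) :
    Continuous (gradient κ) :=
  (InnerProductSpace.toDual ℝ E).symm.continuous.comp (hκ.continuous_fderiv one_ne_zero)

lemma hasCompactSupport_gradient {κ : E → ℝ} (hκ : HasCompactSupport κ) :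
    HasCompactSupport (gradient κ) :=
  (hκ.fderiv ℝ).comp_left (g := (InnerProductSpace.toDual ℝ E).symm) (map_zero _)

end Gradient

section NormedSpaceCalculus

variable {E F : Type*} [NormedAddCommGroup E] [NormedSpace ℝ E] [NormedAddCommGroup F]
  [NormedSpace ℝ F]

lemma hasFDerivAt_comp_add_smul {f : E → F} {y : E} {t : ℝ} {z : E}
    (hf : DifferentiableAt ℝ f (y + t • z)) :
    HasFDerivAt (fun z => f (y + t • z)) (t • fderiv ℝ f (y + t • z)) z := by
  have h_affine : HasFDerivAt (fun z : E => y + t • z) (t • ContinuousLinearMap.id ℝ E) z :=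
    ((hasFDerivAt_id z).const_smul t).const_add y
  refine (hf.hasFDerivAt.comp z h_affine).congr_fderiv ?_
  ext v
  simp

lemma fderiv_fderiv_apply_comm {f : E → F} (hf : ContDiff ℝ 2 f) (z a b : E) :
    fderiv ℝ (fun z => fderiv ℝ f z a) z b = fderiv ℝ (fun z => fderiv ℝ f z b) z a := by
  have hd : DifferentiableAt ℝ (fderiv ℝ f) z :=
    (hf.fderiv_right (m := 1) (by norm_num)).differentiable one_ne_zero z
  have h_symm : IsSymmSndFDerivAt ℝ f z := hf.contDiffAt.isSymmSndFDerivAt (by simp)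
  rw [fderiv_clm_apply hd (differentiableAt_const _),
    fderiv_clm_apply hd (differentiableAt_const _)]
  simpa using h_symm.eq b a

lemma norm_sub_sub_fderiv_le_of_lipschitzWith_fderiv {f : E → F} (hf : Differentiable ℝ f)
    {C : NNReal} (hC : LipschitzWith C (fderiv ℝ f)) (x y : E) :
    ‖f y - f x - fderiv ℝ f x (y - x)‖ ≤ C * ‖y - x‖ ^ 2 := by
  have h_deriv_le : ∀ z ∈ segment ℝ x y, ‖fderiv ℝ f z - fderiv ℝ f x‖ ≤ C * ‖y - x‖ := by
    intro z hz
    refine (hC.norm_sub_le z x).trans ?_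
    gcongr
    exact norm_sub_le_of_mem_segment hz
  have := (convex_segment x y).norm_image_sub_le_of_norm_fderiv_le' (𝕜 := ℝ)
    (fun z _ => hf z) h_deriv_le (left_mem_segment ℝ x y) (right_mem_segment ℝ x y)
  linarith [this, sq ‖y - x‖, mul_assoc (C : ℝ) ‖y - x‖ ‖y - x‖]

end NormedSpaceCalculus

section IntegrationByParts

variable {E : Type*} [NormedAddCommGroup E] [InnerProductSpace ℝ E] [FiniteDimensional ℝ E]
  [MeasurableSpace E] [BorelSpace E] {F : Type*} [NormedAddCommGroup F] [NormedSpace ℝ F]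
  {U : E → ℝ}

lemma smul_integral_inner_gradient_smul {κ : E → F} (hU : ContDiff ℝ 1 U) (hκ : ContDiff ℝ 1 κ)
    (hc : HasCompactSupport κ) (y a : E) (t : ℝ) :
    t • ∫ z, ⟪gradient U (y + t • z), a⟫ • κ z = - ∫ z, U (y + t • z) • fderiv ℝ κ z a := by
  have hUc := hU.continuous
  have hVc := continuous_gradient_of_contDiff hU
  have hκc := hκ.continuous
  have := hκ.continuous_fderiv one_ne_zero
  have hd : ∀ z, DifferentiableAt ℝ U (y + t • z) := fun z => hU.differentiable one_ne_zero _
  have h_fderiv : ∀ z, fderiv ℝ (fun z => U (y + t • z)) z a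
      = t * ⟪gradient U (y + t • z), a⟫ := by
    intro z
    rw [(hasFDerivAt_comp_add_smul (hd z)).fderiv, inner_gradient_left]
    rfl
  have h_ibp := integral_smul_fderiv_eq_neg_fderiv_smul_of_integrable (μ := volume)
    (f := fun z => U (y + t • z)) (g := κ) (v := a) ?_ ?_ ?_
    (fun z _ => (hasFDerivAt_comp_add_smul (hd z)).differentiableAt)
    (fun z _ => hκ.differentiable one_ne_zero z)
  · simp_rw [h_ibp, h_fderiv, mul_smul, integral_smul, neg_neg]
  · simp_rw [h_fderiv]
    exact Continuous.integrable_of_hasCompactSupport (by fun_prop) hc.smul_left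
  · exact Continuous.integrable_of_hasCompactSupport (by fun_prop) (hc.fderiv_apply ℝ a).smul_left
  · exact Continuous.integrable_of_hasCompactSupport (by fun_prop) hc.smul_left

lemma smul_integral_smul_gradient {κ : E → ℝ} (hU : ContDiff ℝ 1 U) (hκ : ContDiff ℝ 1 κ)
    (hc : HasCompactSupport κ) (y : E) (t : ℝ) :
    t • ∫ z, κ z • gradient U (y + t • z) = - ∫ z, U (y + t • z) • gradient κ z := by
  have hUc := hU.continuous
  have hVc := continuous_gradient_of_contDiff hU
  have hκc := hκ.continuous
  have hκ'c := continuous_gradient_of_contDiff hκ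
  have h_int : Integrable fun z => κ z • gradient U (y + t • z) :=
    Continuous.integrable_of_hasCompactSupport (by fun_prop) hc.smul_right
  have h_int' : Integrable fun z => U (y + t • z) • gradient κ z :=
    Continuous.integrable_of_hasCompactSupport (by fun_prop)
      (hasCompactSupport_gradient hc).smul_left
  refine ext_inner_left ℝ fun a => ?_
  rw [inner_smul_right, inner_neg_right, ← integral_inner h_int, ← integral_inner h_int']
  simp_rw [inner_smul_right, fun z => real_inner_comm (gradient κ z) a, inner_gradient_left]
  simpa [real_inner_comm, mul_comm] using smul_integral_inner_gradient_smul hU hκ hc y a t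

lemma integral_inner_gradient_smul_fderiv_comm {κ : E → F} (hU : ContDiff ℝ 1 U)
    (hκ : ContDiff ℝ 2 κ) (hc : HasCompactSupport κ) (y a b : E) {t : ℝ} (ht : t ≠ 0) :
    ∫ z, ⟪gradient U (y + t • z), b⟫ • fderiv ℝ κ z a
      = ∫ z, ⟪gradient U (y + t • z), a⟫ • fderiv ℝ κ z b := by
  have hκ' : ∀ a, ContDiff ℝ 1 fun z => fderiv ℝ κ z a := fun a =>
    (hκ.fderiv_right (by norm_num)).clm_apply contDiff_const
  have h_ab := smul_integral_inner_gradient_smul hU (hκ' a) (hc.fderiv_apply ℝ a) y b t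
  have h_ba := smul_integral_inner_gradient_smul hU (hκ' b) (hc.fderiv_apply ℝ b) y a t
  simp_rw [fderiv_fderiv_apply_comm hκ _ a b] at h_ab
  exact smul_right_injective F ht (h_ab.trans h_ba.symm)

lemma integrable_fderiv_apply_of_hasCompactSupport {κ : E → F} (hκ : ContDiff ℝ 1 κ)
    (hc : HasCompactSupport κ) {W : E → E} (hW : Continuous W) :
    Integrable fun z => fderiv ℝ κ z (W z) := by
  have := hκ.continuous_fderiv one_ne_zero
  refine Continuous.integrable_of_hasCompactSupport (by fun_prop)
    ((hc.fderiv ℝ).mono fun z hz => ?_)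
  contrapose! hz
  simp [Function.notMem_support.1 hz]

lemma integral_fderiv_adjoint_gradient {κ : E → F} (hU : ContDiff ℝ 1 U) (hκ : ContDiff ℝ 2 κ)
    (hc : HasCompactSupport κ) (A : E →L[ℝ] E) (y : E) {t : ℝ} (ht : t ≠ 0) :
    ∫ z, fderiv ℝ κ z (ContinuousLinearMap.adjoint A (gradient U (y + t • z)))
      = ∫ z, fderiv ℝ κ z (A (gradient U (y + t • z))) := by
  have hVc := continuous_gradient_of_contDiff hU
  have hκ'c := (hκ.of_le one_le_two).continuous_fderiv one_ne_zero
  let e := stdOrthonormalBasis ℝ E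
  have h_int : ∀ a b : E, Integrable fun z => ⟪gradient U (y + t • z), b⟫ • fderiv ℝ κ z a :=
    fun a b => Continuous.integrable_of_hasCompactSupport (by fun_prop)
      (hc.fderiv_apply ℝ a).smul_left
  have h_adjoint : ∀ z v, fderiv ℝ κ z (ContinuousLinearMap.adjoint A v)
      = ∑ i, ⟪v, A (e i)⟫ • fderiv ℝ κ z (e i) := by
    intro z v
    conv_lhs => rw [← e.sum_repr' (ContinuousLinearMap.adjoint A v)]
    simp_rw [map_sum, map_smul, ContinuousLinearMap.adjoint_inner_right,
      fun i => real_inner_comm v (A (e i))]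
  have h_apply : ∀ z v, fderiv ℝ κ z (A v) = ∑ i, ⟪v, e i⟫ • fderiv ℝ κ z (A (e i)) := by
    intro z v
    conv_lhs => rw [← e.sum_repr' v]
    simp_rw [map_sum, map_smul, fun i => real_inner_comm v (e i)]
  rw [funext fun z => h_adjoint z (gradient U (y + t • z)),
    funext fun z => h_apply z (gradient U (y + t • z)), integral_finsetSum _ fun i _ => h_int _ _,
    integral_finsetSum _ fun i _ => h_int _ _]
  exact Finset.sum_congr rfl fun i _ => integral_inner_gradient_smul_fderiv_comm hU hκ hc y _ _ ht

end IntegrationByParts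

section SymmetricPart

variable {E : Type*} [NormedAddCommGroup E] [InnerProductSpace ℝ E] [FiniteDimensional ℝ E]

/-- The symmetric part of an operator; only this part of the leading coefficients acts on
gradient fields under the integral sign. -/
noncomputable def symPart (A : E →L[ℝ] E) : E →L[ℝ] E :=
  (1 / 2 : ℝ) • (A + ContinuousLinearMap.adjoint A)

lemma inner_symPart_self (A : E →L[ℝ] E) (v : E) : ⟪symPart A v, v⟫ = ⟪A v, v⟫ := by
  simp only [symPart, _root_.smul_apply, _root_.add_apply, inner_smul_left, inner_add_left,
    ContinuousLinearMap.adjoint_inner_left, RCLike.conj_to_real]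
  rw [real_inner_comm (A v) v]
  ring

lemma inner_symPart_left (A : E →L[ℝ] E) (v w : E) : ⟪symPart A v, w⟫ = ⟪v, symPart A w⟫ := by
  simp only [symPart, _root_.smul_apply, _root_.add_apply, inner_smul_left, inner_add_left,
    inner_smul_right, inner_add_right, ContinuousLinearMap.adjoint_inner_left,
    ContinuousLinearMap.adjoint_inner_right, RCLike.conj_to_real, add_comm]

lemma norm_symPart_le (A : E →L[ℝ] E) : ‖symPart A‖ ≤ ‖A‖ := by
  have h_add := norm_add_le A (ContinuousLinearMap.adjoint A)
  rw [LinearIsometryEquiv.norm_map] at h_add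
  rw [symPart, norm_smul, Real.norm_of_nonneg (by norm_num)]
  linarith

lemma symPart_sub (A B : E →L[ℝ] E) : symPart (A - B) = symPart A - symPart B := by
  simp only [symPart, map_sub]
  module

variable [MeasurableSpace E] [BorelSpace E] {F : Type*} [NormedAddCommGroup F] [NormedSpace ℝ F]

lemma integral_fderiv_symPart_gradient {U : E → ℝ} {κ : E → F} (hU : ContDiff ℝ 1 U)
    (hκ : ContDiff ℝ 2 κ) (hc : HasCompactSupport κ) (A : E →L[ℝ] E) (y : E) {t : ℝ}
    (ht : t ≠ 0) :
    ∫ z, fderiv ℝ κ z (symPart A (gradient U (y + t • z)))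
      = ∫ z, fderiv ℝ κ z (A (gradient U (y + t • z))) := by
  have hVc := continuous_gradient_of_contDiff hU
  have h_int : ∀ B : E →L[ℝ] E, Integrable fun z => fderiv ℝ κ z (B (gradient U (y + t • z))) :=
    fun B => integrable_fderiv_apply_of_hasCompactSupport (hκ.of_le one_le_two) hc (by fun_prop)
  simp only [symPart, _root_.smul_apply, _root_.add_apply, map_smul, map_add]
  rw [integral_smul, integral_add (h_int A) (h_int _),
    integral_fderiv_adjoint_gradient hU hκ hc A y ht]
  module

end SymmetricPart

section PowerBounds

variable {F : Type*} [NormedAddCommGroup F]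

lemma intervalIntegrable_of_norm_le_rpow {g : ℝ → F} {C T α : ℝ} (hα : 0 < α)
    (hg : ContinuousOn g (Set.Ioi 0)) (hb : ∀ τ ∈ Set.Ioc 0 T, ‖g τ‖ ≤ C * τ ^ (α - 1))
    {s : ℝ} (hs : s ∈ Set.Icc 0 T) : IntervalIntegrable g volume 0 s := by
  have h_rpow : IntervalIntegrable (fun τ : ℝ => C * τ ^ (α - 1)) volume 0 s :=
    (intervalIntegral.intervalIntegrable_rpow' (by linarith)).const_mul C
  refine h_rpow.mono_fun' ?_ ?_ <;> rw [Set.uIoc_of_le hs.1]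
  · exact (hg.mono fun τ hτ => hτ.1).aestronglyMeasurable measurableSet_Ioc
  · exact (ae_restrict_mem measurableSet_Ioc).mono fun τ hτ => hb τ ⟨hτ.1, hτ.2.trans hs.2⟩

variable [NormedSpace ℝ F]

lemma norm_neg_inv_smul_le_rpow {v : F} {D α τ : ℝ} (hτ : 0 < τ) (hv : ‖v‖ ≤ D * τ ^ α) :
    ‖-τ⁻¹ • v‖ ≤ D * τ ^ (α - 1) := by
  rw [norm_smul, norm_neg, norm_inv, Real.norm_of_nonneg hτ.le, Real.rpow_sub_one hτ.ne']
  calc τ⁻¹ * ‖v‖ ≤ τ⁻¹ * (D * τ ^ α) := by gcongr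
    _ = D * (τ ^ α / τ) := by ring

lemma norm_sub_le_of_norm_hasDerivAt_le_rpow {f f' : ℝ → F} {s t D β : ℝ} (hs : 0 < s)
    (hst : s ≤ t) (hβ : β ≠ 0) (hf : ∀ τ ∈ Set.Icc s t, HasDerivAt f (f' τ) τ)
    (hf' : ∀ τ ∈ Set.Icc s t, ‖f' τ‖ ≤ D * τ ^ (β - 1)) :
    ‖f t - f s‖ ≤ D * ((t ^ β - s ^ β) / β) := by
  have h_bound : ∀ τ ∈ Set.Icc s t,
      HasDerivAt (fun τ : ℝ => D * ((τ ^ β - s ^ β) / β)) (D * τ ^ (β - 1)) τ := by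
    intro τ hτ
    have h_rpow := Real.hasDerivAt_rpow_const (p := β) (Or.inl (hs.trans_le hτ.1).ne')
    refine (((h_rpow.sub_const (s ^ β)).div_const β).const_mul D).congr_deriv ?_
    field_simp
  refine image_norm_le_of_norm_deriv_right_le_deriv_boundary' (f := fun τ => f τ - f s) (f' := f')
    (fun τ hτ => ((hf τ hτ).sub_const _).continuousAt.continuousWithinAt)
    (fun τ hτ => ((hf τ (Set.Ico_subset_Icc_self hτ)).sub_const _).hasDerivWithinAt)
    (by simp) (fun τ hτ => (h_bound τ hτ).continuousAt.continuousWithinAt)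
    (fun τ hτ => (h_bound τ (Set.Ico_subset_Icc_self hτ)).hasDerivWithinAt)
    (fun τ hτ => hf' τ (Set.Ico_subset_Icc_self hτ)) (Set.right_mem_Icc.2 hst)

lemma norm_sub_le_rpow_of_norm_hasDerivAt_le_rpow {f f' : ℝ → F} {s t D β : ℝ} (hs : 0 < s)
    (hst : s ≤ t) (hD : 0 ≤ D) (hβ : β < 0) (hf : ∀ τ ∈ Set.Icc s t, HasDerivAt f (f' τ) τ)
    (hf' : ∀ τ ∈ Set.Icc s t, ‖f' τ‖ ≤ D * τ ^ (β - 1)) :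
    ‖f t - f s‖ ≤ D / -β * s ^ β := by
  refine (norm_sub_le_of_norm_hasDerivAt_le_rpow hs hst hβ.ne hf hf').trans ?_
  have ht : 0 ≤ t ^ β := Real.rpow_nonneg (hs.le.trans hst) _
  calc D * ((t ^ β - s ^ β) / β) = D * ((s ^ β - t ^ β) / -β) := by
        rw [← neg_div_neg_eq, neg_sub]
    _ ≤ D * (s ^ β / -β) := by gcongr <;> linarith
    _ = D / -β * s ^ β := by ring

lemma norm_integral_le_of_norm_le_rpow {g : ℝ → F} {C s α : ℝ} (hα : 0 < α) (hs : 0 ≤ s)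
    (hb : ∀ τ ∈ Set.Ioc 0 s, ‖g τ‖ ≤ C * τ ^ (α - 1)) :
    ‖∫ τ in (0 : ℝ)..s, g τ‖ ≤ C * s ^ α / α := by
  have h_rpow : IntervalIntegrable (fun τ : ℝ => C * τ ^ (α - 1)) volume 0 s :=
    (intervalIntegral.intervalIntegrable_rpow' (by linarith)).const_mul C
  refine (intervalIntegral.norm_integral_le_of_norm_le hs (ae_of_all _ hb) h_rpow).trans_eq ?_
  rw [intervalIntegral.integral_const_mul, integral_rpow (Or.inl (by linarith)),
    sub_add_cancel, Real.zero_rpow hα.ne', sub_zero, mul_div_assoc]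

lemma hasDerivAt_integral_of_norm_le_rpow [CompleteSpace F] {g : ℝ → F} {C T α : ℝ} (hα : 0 < α)
    (hg : ContinuousOn g (Set.Ioi 0)) (hb : ∀ τ ∈ Set.Ioc 0 T, ‖g τ‖ ≤ C * τ ^ (α - 1))
    {s : ℝ} (hs : s ∈ Set.Ioc 0 T) : HasDerivAt (fun s => ∫ τ in (0 : ℝ)..s, g τ) (g s) s := by
  have h_nhds : Set.Ioi (0 : ℝ) ∈ 𝓝 s := Ioi_mem_nhds hs.1
  exact intervalIntegral.integral_hasDerivAt_right
    (intervalIntegrable_of_norm_le_rpow hα hg hb ⟨hs.1.le, hs.2⟩)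
    (hg.stronglyMeasurableAtFilter isOpen_Ioi s hs.1) (hg.continuousAt h_nhds)

variable {E : Type*} [NormedAddCommGroup E] [NormedSpace ℝ E] [CompleteSpace F]

lemma norm_sub_sub_integral_clm_apply_le_rpow {f g : ℝ → F} {g' : ℝ → E →L[ℝ] F} {h : E}
    {T α C₁ C₂ : ℝ} (hC₂ : 0 ≤ C₂) (hα : α ∈ Set.Ioo (0 : ℝ) 1)
    (hf : ∀ t, 0 < t → HasDerivAt f (g t) t) (hg' : ContinuousOn g' (Set.Ioi 0))
    (hg'_le : ∀ t ∈ Set.Ioc 0 T, ‖g' t‖ ≤ C₁ * t ^ (α - 1))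
    (hg_sub : ∀ t ∈ Set.Icc ‖h‖ T, ‖g t - g' t h‖ ≤ C₂ * ‖h‖ ^ 2 * t ^ (α - 2)) (hh : h ≠ 0)
    (hhT : ‖h‖ ≤ T) :
    ‖(f T - (∫ τ in (0 : ℝ)..T, g' τ) h) - (f ‖h‖ - (∫ τ in (0 : ℝ)..‖h‖, g' τ) h)‖
      ≤ C₂ / (1 - α) * ‖h‖ ^ (1 + α) := by
  have hr : 0 < ‖h‖ := norm_pos_iff.2 hh
  have h_deriv : ∀ τ ∈ Set.Icc ‖h‖ T,
      HasDerivAt (fun τ => f τ - (∫ σ in (0 : ℝ)..τ, g' σ) h) (g τ - g' τ h) τ := fun τ hτ =>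
    (hf τ (hr.trans_le hτ.1)).sub
      ((ContinuousLinearMap.apply ℝ F h).hasFDerivAt.comp_hasDerivAt τ
        (hasDerivAt_integral_of_norm_le_rpow hα.1 hg' hg'_le ⟨hr.trans_le hτ.1, hτ.2⟩))
  refine (norm_sub_le_rpow_of_norm_hasDerivAt_le_rpow (D := C₂ * ‖h‖ ^ 2) (β := α - 1) hr hhT
    (by positivity) (by linarith [hα.2]) h_deriv fun τ hτ => ?_).trans_eq ?_
  · rw [show α - 1 - 1 = α - 2 by ring]
    exact hg_sub τ hτ
  · have h_sq : ‖h‖ ^ 2 * ‖h‖ ^ (α - 1) = ‖h‖ ^ (1 + α) := by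
      rw [← Real.rpow_natCast, ← Real.rpow_add hr]
      norm_num
      ring_nf
    rw [neg_sub, mul_div_right_comm, mul_assoc, h_sq]

-- The scale derivative `g t h` is integrated between the scales `‖h‖` and `T` only: its linear
-- part `g' t` is integrable down to scale `0`, its quadratic remainder is not.
lemma exists_norm_sub_le_rpow_of_scale_derivative {f g : ℝ → E → F} {g' : ℝ → E →L[ℝ] F}
    {f' : E →L[ℝ] F} {T α C₀ C₁ C₂ : ℝ} (hC₀ : 0 ≤ C₀) (hC₂ : 0 ≤ C₂) (hα : α ∈ Set.Ioo (0 : ℝ) 1)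
    (hf : ∀ h t, 0 < t → HasDerivAt (fun t => f t h) (g t h) t)
    (hg' : ContinuousOn g' (Set.Ioi 0))
    (hg'_le : ∀ t ∈ Set.Ioc 0 T, ‖g' t‖ ≤ C₁ * t ^ (α - 1))
    (hg_sub : ∀ t ∈ Set.Ioc 0 T, ∀ h, ‖h‖ ≤ t → ‖g t h - g' t h‖ ≤ C₂ * ‖h‖ ^ 2 * t ^ (α - 2))
    (hf' : ∀ h, ‖h‖ ≤ T → ‖f T h - f' h‖ ≤ C₀ * ‖h‖ ^ 2) :
    ∃ (L : E →L[ℝ] F) (C : ℝ), ∀ h, h ≠ 0 → ‖h‖ ≤ T → ‖f ‖h‖ h - L h‖ ≤ C * ‖h‖ ^ (1 + α) := by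
  obtain ⟨hα₀, hα₁⟩ := hα
  let m : ℝ → E →L[ℝ] F := fun s => ∫ τ in (0 : ℝ)..s, g' τ
  refine ⟨f' - m T, C₂ / (1 - α) + C₀ * T ^ (1 - α) + C₁ / α, fun h hh hhT => ?_⟩
  have hr : 0 < ‖h‖ := norm_pos_iff.2 hh
  set r := ‖h‖ with hr_def
  have h_remainder : ‖(f T h - m T h) - (f r h - m r h)‖ ≤ C₂ / (1 - α) * r ^ (1 + α) :=
    norm_sub_sub_integral_clm_apply_le_rpow hC₂ ⟨hα₀, hα₁⟩ (hf h) hg' hg'_le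
      (fun t ht => hg_sub t ⟨hr.trans_le ht.1, ht.2⟩ h ht.1) hh hhT
  have h_top : ‖f T h - f' h‖ ≤ C₀ * T ^ (1 - α) * r ^ (1 + α) := by
    have h_split : r ^ 2 = r ^ (1 - α) * r ^ (1 + α) := by
      rw [← Real.rpow_add hr, ← Real.rpow_natCast]
      norm_num
    refine (hf' h hhT).trans ?_
    rw [← hr_def, h_split, mul_assoc]
    gcongr
  have h_linear : ‖m r h‖ ≤ C₁ / α * r ^ (1 + α) := by
    calc ‖m r h‖ ≤ C₁ * r ^ α / α * r :=
          (m r).le_of_opNorm_le (norm_integral_le_of_norm_le_rpow hα₀ hr.le fun τ hτ =>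
            hg'_le τ ⟨hτ.1, hτ.2.trans hhT⟩) h
      _ = C₁ / α * r ^ (1 + α) := by rw [Real.rpow_add hr, Real.rpow_one]; ring
  calc ‖f r h - (f' - m T) h‖
      = ‖-((f T h - m T h) - (f r h - m r h)) + (f T h - f' h) + m r h‖ := by
        congr 1; rw [_root_.sub_apply]; abel
    _ ≤ ‖(f T h - m T h) - (f r h - m r h)‖ + ‖f T h - f' h‖ + ‖m r h‖ := by
        refine norm_add₃_le.trans_eq ?_; rw [norm_neg]
    _ ≤ (C₂ / (1 - α) + C₀ * T ^ (1 - α) + C₁ / α) * r ^ (1 + α) := by linarith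

end PowerBounds

section C1Bound

variable {E F : Type*} [NormedAddCommGroup E] [NormedSpace ℝ E] [NormedAddCommGroup F]
  [NormedSpace ℝ F]

/-- `K` bounds both `Θ` and its derivative. -/
def HasC1Bound (K : ℝ) (Θ : E → F) : Prop :=
  ∀ z, ‖Θ z‖ ≤ K ∧ ‖fderiv ℝ Θ z‖ ≤ K

lemma HasC1Bound.nonneg {K : ℝ} {Θ : E → F} (hΘ : HasC1Bound K Θ) : 0 ≤ K :=
  (norm_nonneg _).trans (hΘ 0).1

lemma HasC1Bound.mono {K K' : ℝ} {Θ : E → F} (hΘ : HasC1Bound K Θ) (hK : K ≤ K') :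
    HasC1Bound K' Θ :=
  fun z => ⟨(hΘ z).1.trans hK, (hΘ z).2.trans hK⟩

lemma HasC1Bound.clm_comp {G : Type*} [NormedAddCommGroup G] [NormedSpace ℝ G] {K : ℝ}
    {Θ : E → F} (hΘ : HasC1Bound K Θ) (hd : Differentiable ℝ Θ) (L : F →L[ℝ] G) :
    HasC1Bound (‖L‖ * K) fun z => L (Θ z) := by
  refine fun z => ⟨L.le_opNorm_of_le (hΘ z).1, ?_⟩
  have h_fderiv : fderiv ℝ (fun z => L (Θ z)) z = L ∘L fderiv ℝ Θ z :=
    (L.hasFDerivAt.comp z (hd z).hasFDerivAt).fderiv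
  rw [h_fderiv]
  exact (L.opNorm_comp_le _).trans (by gcongr; exact (hΘ z).2)

end C1Bound

section TranslationExpansion

variable {E F : Type*} [NormedAddCommGroup E] [NormedSpace ℝ E] [NormedAddCommGroup F]
  [NormedSpace ℝ F]

lemma exists_norm_comp_sub_sub_le_of_hasCompactSupport {f : E → F} (hf : ContDiff ℝ 2 f)
    (hc : HasCompactSupport f) :
    ∃ C, ∀ z w, ‖f (z - w) - f z - fderiv ℝ f z (-w)‖ ≤ C * ‖w‖ ^ 2 := by
  obtain ⟨C, hC⟩ := (hf.fderiv_right (m := 1) (by norm_num)).lipschitzWith_of_hasCompactSupport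
    (hc.fderiv ℝ) one_ne_zero
  refine ⟨C, fun z w => ?_⟩
  simpa only [sub_sub_cancel_left, norm_neg] using
    norm_sub_sub_fderiv_le_of_lipschitzWith_fderiv (hf.differentiable two_ne_zero) hC z (z - w)

end TranslationExpansion

lemma hasCompactSupport_of_tsupport_subset_closedBall {E F : Type*} [PseudoMetricSpace E]
    [ProperSpace E] [Zero F] {f : E → F} {x : E} {R : ℝ} (hf : tsupport f ⊆ closedBall x R) :
    HasCompactSupport f :=
  (isCompact_closedBall x R).of_isClosed_subset (isClosed_tsupport f) hf

section MeanZeroBump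

variable {E : Type*} [NormedAddCommGroup E] [InnerProductSpace ℝ E] [FiniteDimensional ℝ E]
  [MeasurableSpace E] [BorelSpace E] {F : Type*} [NormedAddCommGroup F] [NormedSpace ℝ F]

/-- A smooth test function supported in the closed ball of radius `R` about the origin, with
vanishing integral: the functions against which a flux satisfying the equation is small. -/
structure IsMeanZeroBump (R : ℝ) (Θ : E → F) : Prop where
  contDiff : ContDiff ℝ (⊤ : ℕ∞) Θ
  tsupport_subset : tsupport Θ ⊆ closedBall 0 R
  integral_eq_zero : ∫ z, Θ z = 0

namespace IsMeanZeroBump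

variable {R : ℝ} {Θ Θ' : E → F}

lemma hasCompactSupport (hΘ : IsMeanZeroBump R Θ) : HasCompactSupport Θ :=
  hasCompactSupport_of_tsupport_subset_closedBall hΘ.tsupport_subset

lemma integrable (hΘ : IsMeanZeroBump R Θ) : Integrable Θ :=
  hΘ.contDiff.continuous.integrable_of_hasCompactSupport hΘ.hasCompactSupport

lemma eq_zero (hΘ : IsMeanZeroBump R Θ) {z : E} (hz : z ∉ closedBall 0 R) : Θ z = 0 :=
  image_eq_zero_of_notMem_tsupport fun h => hz (hΘ.tsupport_subset h)

lemma fderiv_eq_zero (hΘ : IsMeanZeroBump R Θ) {z : E} (hz : z ∉ closedBall 0 R) :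
    fderiv ℝ Θ z = 0 :=
  fderiv_of_notMem_tsupport ℝ fun h => hz (hΘ.tsupport_subset h)

lemma mono {R' : ℝ} (hΘ : IsMeanZeroBump R Θ) (hR : R ≤ R') : IsMeanZeroBump R' Θ :=
  ⟨hΘ.contDiff, hΘ.tsupport_subset.trans (closedBall_subset_closedBall hR), hΘ.integral_eq_zero⟩

lemma sub (hΘ : IsMeanZeroBump R Θ) (hΘ' : IsMeanZeroBump R Θ') :
    IsMeanZeroBump R (fun z => Θ z - Θ' z) where
  contDiff := hΘ.contDiff.sub hΘ'.contDiff
  tsupport_subset := (tsupport_sub Θ Θ').trans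
    (Set.union_subset hΘ.tsupport_subset hΘ'.tsupport_subset)
  integral_eq_zero := by
    rw [integral_sub hΘ.integrable hΘ'.integrable, hΘ.integral_eq_zero, hΘ'.integral_eq_zero,
      sub_zero]

lemma comp_sub_const (hΘ : IsMeanZeroBump R Θ) (w : E) :
    IsMeanZeroBump (R + ‖w‖) (fun z => Θ (z - w)) where
  contDiff := hΘ.contDiff.comp (contDiff_id.sub contDiff_const)
  tsupport_subset := by
    refine closure_minimal (fun z hz => ?_) isClosed_closedBall
    have h_mem : z - w ∈ closedBall (0 : E) R := hΘ.tsupport_subset (subset_tsupport Θ hz)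
    rw [mem_closedBall_zero_iff] at h_mem ⊢
    calc ‖z‖ = ‖z - w + w‖ := by rw [sub_add_cancel]
      _ ≤ ‖z - w‖ + ‖w‖ := norm_add_le _ _
      _ ≤ R + ‖w‖ := by gcongr
  integral_eq_zero := by rw [integral_sub_right_eq_self, hΘ.integral_eq_zero]

variable {G : Type*} [NormedAddCommGroup G] [NormedSpace ℝ G]

lemma clm_comp [CompleteSpace F] [CompleteSpace G] (hΘ : IsMeanZeroBump R Θ) (L : F →L[ℝ] G) :
    IsMeanZeroBump R (fun z => L (Θ z)) where
  contDiff := L.contDiff.comp hΘ.contDiff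
  tsupport_subset := (closure_mono (Function.support_comp_subset (map_zero L) Θ)).trans
    hΘ.tsupport_subset
  integral_eq_zero := by rw [L.integral_comp_comm hΘ.integrable, hΘ.integral_eq_zero, map_zero]

protected lemma fderiv [CompleteSpace F] (hΘ : IsMeanZeroBump R Θ) :
    IsMeanZeroBump R (fderiv ℝ Θ) where
  contDiff := hΘ.contDiff.fderiv_right (by norm_num)
  tsupport_subset := (tsupport_fderiv_subset ℝ).trans hΘ.tsupport_subset
  integral_eq_zero := by
    have hΘ' := hΘ.contDiff.continuous_fderiv (by simp)
    have h_int : Integrable (fderiv ℝ Θ) :=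
      hΘ'.integrable_of_hasCompactSupport (hΘ.hasCompactSupport.fderiv ℝ)
    ext v
    rw [ContinuousLinearMap.integral_apply h_int]
    simpa using integral_smul_fderiv_eq_neg_fderiv_smul_of_integrable (μ := volume)
      (f := fun _ : E => (1 : ℝ)) (g := Θ) (v := v) (by simp)
      (by simpa using h_int.apply_continuousLinearMap v) (by simpa using hΘ.integrable)
      (fun z _ => differentiableAt_const _) (fun z _ => hΘ.contDiff.differentiable (by simp) z)

lemma exists_hasC1Bound (hΘ : IsMeanZeroBump R Θ) : ∃ K, HasC1Bound K Θ := by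
  obtain ⟨K, hK⟩ := hΘ.contDiff.continuous.bounded_above_of_compact_support hΘ.hasCompactSupport
  obtain ⟨K', hK'⟩ := (hΘ.contDiff.continuous_fderiv (by simp)).bounded_above_of_compact_support
    (hΘ.hasCompactSupport.fderiv ℝ)
  exact ⟨max K K', fun z => ⟨(hK z).trans (le_max_left _ _), (hK' z).trans (le_max_right _ _)⟩⟩

lemma exists_hasC1Bound_comp_sub_sub [CompleteSpace F] (hΘ : IsMeanZeroBump R Θ) :
    ∃ C, ∀ w, HasC1Bound (C * ‖w‖ ^ 2) (fun z => Θ (z - w) - Θ z - fderiv ℝ Θ z (-w)) := by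
  obtain ⟨C, hC⟩ := exists_norm_comp_sub_sub_le_of_hasCompactSupport
    (contDiff_infty.1 hΘ.contDiff 2) hΘ.hasCompactSupport
  obtain ⟨C', hC'⟩ := exists_norm_comp_sub_sub_le_of_hasCompactSupport
    (contDiff_infty.1 hΘ.fderiv.contDiff 2) hΘ.fderiv.hasCompactSupport
  have h_diff : Differentiable ℝ Θ := hΘ.contDiff.differentiable (by simp)
  have h_diff' : Differentiable ℝ (fderiv ℝ Θ) := hΘ.fderiv.contDiff.differentiable (by simp)
  refine ⟨max C C', fun w z => ⟨(hC z w).trans (by gcongr; exact le_max_left _ _), ?_⟩⟩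
  have h_comp : HasFDerivAt (fun z => Θ (z - w)) (fderiv ℝ Θ (z - w)) z :=
    (hasFDerivAt_comp_sub w).2 (h_diff (z - w)).hasFDerivAt
  have h_apply : HasFDerivAt (fun z => fderiv ℝ Θ z (-w)) (fderiv ℝ (fderiv ℝ Θ) z (-w)) z := by
    refine ((h_diff' z).hasFDerivAt.clm_apply (hasFDerivAt_const (-w) z)).congr_fderiv ?_
    ext v
    simpa using (contDiff_infty.1 hΘ.contDiff 2).contDiffAt.isSymmSndFDerivAt (by simp) v w
  rw [((h_comp.fun_sub (h_diff z).hasFDerivAt).fun_sub h_apply).fderiv]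
  exact (hC' z w).trans (by gcongr; exact le_max_right _ _)

end IsMeanZeroBump

end MeanZeroBump

section EllipticOperators

variable {E : Type*} [NormedAddCommGroup E] [InnerProductSpace ℝ E]

/-- Symmetric operators with ellipticity constant `lam` and norm at most `Lam`: the admissible
frozen coefficients. -/
structure IsElliptic (lam Lam : ℝ) (Q : E →L[ℝ] E) : Prop where
  inner_left : ∀ v w, ⟪Q v, w⟫ = ⟪v, Q w⟫
  coercive : ∀ v, lam * ‖v‖ ^ 2 ≤ ⟪Q v, v⟫
  norm_le : ‖Q‖ ≤ Lam

namespace IsElliptic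

variable {lam Lam : ℝ} {Q Q' : E →L[ℝ] E}

lemma isInvertible [FiniteDimensional ℝ E] (hQ : IsElliptic lam Lam Q) (hlam : 0 < lam) :
    Q.IsInvertible := by
  have h_inj : Function.Injective (Q : E →ₗ[ℝ] E) := by
    refine (injective_iff_map_eq_zero _).2 fun v hv => ?_
    have h_coercive := hQ.coercive v
    rw [show Q v = 0 from hv, inner_zero_left] at h_coercive
    by_contra h
    have : 0 < lam * ‖v‖ ^ 2 := by positivity
    linarith
  exact ⟨(LinearEquiv.ofInjectiveEndo (Q : E →ₗ[ℝ] E) h_inj).toContinuousLinearEquiv, rfl⟩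

variable [FiniteDimensional ℝ E]

lemma inner_inverse_left (hQ : IsElliptic lam Lam Q) (hlam : 0 < lam) (v w : E) :
    ⟪Q.inverse v, w⟫ = ⟪v, Q.inverse w⟫ := by
  have h_inv := hQ.isInvertible hlam
  rw [← h_inv.self_apply_inverse w, ← hQ.inner_left, h_inv.self_apply_inverse,
    h_inv.self_apply_inverse]

lemma norm_inverse_le (hQ : IsElliptic lam Lam Q) (hlam : 0 < lam) : ‖Q.inverse‖ ≤ lam⁻¹ := by
  refine ContinuousLinearMap.opNorm_le_bound _ (by positivity) fun v => ?_
  have h_coercive := hQ.coercive (Q.inverse v)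
  rw [(hQ.isInvertible hlam).self_apply_inverse] at h_coercive
  have h_cs := real_inner_le_norm v (Q.inverse v)
  rcases (norm_nonneg (Q.inverse v)).eq_or_lt with h | h
  · rw [← h]
    positivity
  · rw [inv_mul_eq_div, le_div_iff₀ hlam]
    nlinarith

lemma coercive_inverse (hQ : IsElliptic lam Lam Q) (hlam : 0 < lam) (v : E) :
    lam / Lam ^ 2 * ‖v‖ ^ 2 ≤ ⟪Q.inverse v, v⟫ := by
  have h_inv := (hQ.isInvertible hlam).self_apply_inverse v
  have h_norm : ‖v‖ ≤ Lam * ‖Q.inverse v‖ := by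
    simpa only [h_inv] using Q.le_of_opNorm_le hQ.norm_le (Q.inverse v)
  have h_coercive := hQ.coercive (Q.inverse v)
  rw [h_inv, real_inner_comm] at h_coercive
  refine le_trans ?_ h_coercive
  rcases eq_or_ne Lam 0 with rfl | hLam
  · simpa using by positivity
  calc lam / Lam ^ 2 * ‖v‖ ^ 2 ≤ lam / Lam ^ 2 * (Lam * ‖Q.inverse v‖) ^ 2 := by gcongr
    _ = lam * ‖Q.inverse v‖ ^ 2 := by field_simp

lemma norm_inverse_sub_inverse_le (hQ : IsElliptic lam Lam Q) (hQ' : IsElliptic lam Lam Q')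
    (hlam : 0 < lam) : ‖Q.inverse - Q'.inverse‖ ≤ lam⁻¹ * lam⁻¹ * ‖Q - Q'‖ := by
  have h_resolvent : Q.inverse - Q'.inverse = Q.inverse ∘L (Q' - Q) ∘L Q'.inverse := by
    ext v
    simp [(hQ.isInvertible hlam).inverse_apply_self, (hQ'.isInvertible hlam).self_apply_inverse]
  calc ‖Q.inverse - Q'.inverse‖ ≤ ‖Q.inverse‖ * (‖Q' - Q‖ * ‖Q'.inverse‖) := by
        rw [h_resolvent]
        exact (ContinuousLinearMap.opNorm_comp_le _ _).trans
          (by gcongr; exact ContinuousLinearMap.opNorm_comp_le _ _)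
    _ ≤ lam⁻¹ * (‖Q' - Q‖ * lam⁻¹) := by
        gcongr
        · exact hQ.norm_inverse_le hlam
        · exact hQ'.norm_inverse_le hlam
    _ = lam⁻¹ * lam⁻¹ * ‖Q - Q'‖ := by rw [norm_sub_rev]; ring

end IsElliptic

lemma isElliptic_symPart [FiniteDimensional ℝ E] {lam Lam : ℝ} {A : E →L[ℝ] E}
    (hA : ∀ v, lam * ‖v‖ ^ 2 ≤ ⟪A v, v⟫) (hA' : ‖A‖ ≤ Lam) : IsElliptic lam Lam (symPart A) where
  inner_left := inner_symPart_left A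
  coercive v := (hA v).trans_eq (inner_symPart_self A v).symm
  norm_le := (norm_symPart_le A).trans hA'

end EllipticOperators

section EllipticKernel

variable {E : Type*} [NormedAddCommGroup E] [InnerProductSpace ℝ E]

/-- The averaging kernel `ψ(z) = χ(⟪P z, z⟫)` attached to the frozen coefficient `P⁻¹`. -/
noncomputable def ellipticKernel (χ : ℝ → ℝ) (P : E →L[ℝ] E) (z : E) : ℝ := χ ⟪P z, z⟫

/-- The vector field `Φ(z) = χ(⟪P z, z⟫) P z`, whose flux for the coefficient `P⁻¹` is, up to the
factor `-t⁻¹`, the scale derivative of the averages against `ellipticKernel χ P`. -/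
noncomputable def ellipticField (χ : ℝ → ℝ) (P : E →L[ℝ] E) (z : E) : E := χ ⟪P z, z⟫ • P z

lemma contDiff_ellipticField {χ : ℝ → ℝ} {n : ℕ∞} (hχ : ContDiff ℝ n χ) :
    ContDiff ℝ n fun Pz : (E →L[ℝ] E) × E => ellipticField χ Pz.1 Pz.2 := by
  have h_apply : ContDiff ℝ n fun Pz : (E →L[ℝ] E) × E => Pz.1 Pz.2 :=
    contDiff_fst.clm_apply contDiff_snd
  exact (hχ.comp (h_apply.inner ℝ contDiff_snd)).smul h_apply

lemma contDiff_ellipticKernel {χ : ℝ → ℝ} {n : ℕ∞} (hχ : ContDiff ℝ n χ) (P : E →L[ℝ] E) :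
    ContDiff ℝ n (ellipticKernel χ P) :=
  hχ.comp (P.contDiff.inner ℝ contDiff_id)

section Derivatives

variable {χ : ℝ → ℝ} {P : E →L[ℝ] E}

lemma hasFDerivAt_ellipticKernel (hP : ∀ v w, ⟪P v, w⟫ = ⟪v, P w⟫) (hχ : Differentiable ℝ χ)
    (z : E) :
    HasFDerivAt (ellipticKernel χ P) ((2 * deriv χ ⟪P z, z⟫) • innerSL ℝ (P z)) z := by
  have h_quad : HasFDerivAt (fun z => ⟪P z, z⟫) ((2 : ℝ) • innerSL ℝ (P z)) z := by
    refine (P.hasFDerivAt.inner ℝ (hasFDerivAt_id z)).congr_fderiv ?_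
    ext v
    simp [fderivInnerCLM_apply, hP v z, real_inner_comm (P z) v]
    ring
  refine ((hχ _).hasDerivAt.comp_hasFDerivAt z h_quad).congr_fderiv ?_
  ext v
  simp only [_root_.smul_apply, innerSL_apply_apply, smul_eq_mul]
  ring

lemma gradient_ellipticKernel [CompleteSpace E] (hP : ∀ v w, ⟪P v, w⟫ = ⟪v, P w⟫)
    (hχ : Differentiable ℝ χ) (z : E) :
    gradient (ellipticKernel χ P) z = (2 * deriv χ ⟪P z, z⟫) • P z := by
  refine ext_inner_right ℝ fun v => ?_
  rw [inner_gradient_left, (hasFDerivAt_ellipticKernel hP hχ z).fderiv, inner_smul_left]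
  rfl

lemma fderiv_ellipticField_apply [CompleteSpace E] (hP : ∀ v w, ⟪P v, w⟫ = ⟪v, P w⟫)
    (hχ : Differentiable ℝ χ) {Q : E →L[ℝ] E} (hPQ : ∀ v, P (Q v) = v) (z v : E) :
    fderiv ℝ (ellipticField χ P) z (Q v)
      = ellipticKernel χ P z • v + ⟪v, z⟫ • gradient (ellipticKernel χ P) z := by
  have h_deriv : HasFDerivAt (ellipticField χ P) _ z :=
    (hasFDerivAt_ellipticKernel hP hχ z).smul P.hasFDerivAt
  rw [h_deriv.fderiv, gradient_ellipticKernel hP hχ]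
  simp only [_root_.add_apply, _root_.smul_apply, ContinuousLinearMap.smulRight_apply,
    innerSL_apply_apply, hPQ, smul_smul, smul_eq_mul]
  rw [hP z (Q v), hPQ, real_inner_comm v z, mul_comm]

end Derivatives

section Support

variable {χ : ContDiffBump (0 : ℝ)} {P : E →L[ℝ] E}

lemma ellipticKernel_eq_zero (hP : ∀ v, χ.rOut * ‖v‖ ^ 2 ≤ ⟪P v, v⟫) {z : E} (hz : 1 ≤ ‖z‖) :
    ellipticKernel χ P z = 0 := by
  refine χ.zero_of_le_dist ?_
  rw [dist_zero_right]
  calc χ.rOut ≤ χ.rOut * ‖z‖ ^ 2 := le_mul_of_one_le_right χ.rOut_pos.le (one_le_pow₀ hz)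
    _ ≤ ⟪P z, z⟫ := hP z
    _ ≤ ‖⟪P z, z⟫‖ := le_abs_self _

lemma tsupport_ellipticKernel_subset (hP : ∀ v, χ.rOut * ‖v‖ ^ 2 ≤ ⟪P v, v⟫) :
    tsupport (ellipticKernel χ P) ⊆ closedBall 0 1 := by
  refine closure_minimal (fun z hz => ?_) isClosed_closedBall
  by_contra h
  rw [mem_closedBall_zero_iff, not_le] at h
  exact hz (ellipticKernel_eq_zero hP h.le)

end Support

lemma exists_abs_ellipticKernel_sub_le (χ : ContDiffBump (0 : ℝ)) :
    ∃ C, ∀ P P' : E →L[ℝ] E, (∀ v, χ.rOut * ‖v‖ ^ 2 ≤ ⟪P v, v⟫) →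
      (∀ v, χ.rOut * ‖v‖ ^ 2 ≤ ⟪P' v, v⟫) →
      ∀ z, |ellipticKernel χ P z - ellipticKernel χ P' z| ≤ C * ‖P - P'‖ := by
  obtain ⟨C, hC⟩ := (χ.contDiff (n := 1)).lipschitzWith_of_hasCompactSupport χ.hasCompactSupport
    one_ne_zero
  refine ⟨C, fun P P' hP hP' z => ?_⟩
  rcases le_or_gt ‖z‖ 1 with hz | hz
  · have h_inner : |⟪P z, z⟫ - ⟪P' z, z⟫| ≤ ‖P - P'‖ := by
      rw [← inner_sub_left]
      calc |⟪P z - P' z, z⟫| ≤ ‖(P - P') z‖ * ‖z‖ := abs_real_inner_le_norm _ _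
        _ ≤ ‖P - P'‖ * 1 * 1 := by gcongr; exact (P - P').le_opNorm_of_le hz
        _ = ‖P - P'‖ := by ring
    exact (hC.norm_sub_le _ _).trans (by gcongr; exact h_inner)
  · rw [ellipticKernel_eq_zero hP hz.le, ellipticKernel_eq_zero hP' hz.le, sub_zero, abs_zero]
    positivity

variable [FiniteDimensional ℝ E] [MeasurableSpace E] [BorelSpace E]

lemma integral_ellipticField (χ : ℝ → ℝ) (P : E →L[ℝ] E) : ∫ z, ellipticField χ P z = 0 := by
  have h_odd : ∀ z, ellipticField χ P (-z) = -ellipticField χ P z := by simp [ellipticField]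
  have h_neg := integral_neg_eq_self (ellipticField χ P) volume
  simp_rw [h_odd, integral_neg] at h_neg
  have : IsAddTorsionFree E := .of_isTorsionFree ℝ E
  exact neg_eq_self.1 h_neg

lemma isMeanZeroBump_ellipticField {χ : ContDiffBump (0 : ℝ)} {P : E →L[ℝ] E}
    (hP : ∀ v, χ.rOut * ‖v‖ ^ 2 ≤ ⟪P v, v⟫) : IsMeanZeroBump 1 (ellipticField χ P) where
  contDiff := (contDiff_ellipticField χ.contDiff).comp (contDiff_const.prodMk contDiff_id)
  tsupport_subset := (closure_mono (Function.support_smul_subset_left (ellipticKernel χ P) P)).trans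
    (tsupport_ellipticKernel_subset hP)
  integral_eq_zero := integral_ellipticField χ P

lemma integral_ellipticKernel_pos {χ : ContDiffBump (0 : ℝ)} {P : E →L[ℝ] E}
    (hP : ∀ v, χ.rOut * ‖v‖ ^ 2 ≤ ⟪P v, v⟫) : 0 < ∫ z, ellipticKernel χ P z := by
  have h_cont := (contDiff_ellipticKernel (n := 0) χ.contDiff P).continuous
  have h_supp : HasCompactSupport (ellipticKernel χ P) :=
    (isCompact_closedBall 0 1).of_isClosed_subset (isClosed_tsupport _)
      (tsupport_ellipticKernel_subset hP)
  refine h_cont.integral_pos_of_hasCompactSupport_nonneg_nonzero (x := 0) h_supp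
    (fun z => χ.nonneg) ?_
  have h_one : ellipticKernel χ P 0 = 1 := by
    rw [ellipticKernel, inner_zero_right]
    exact χ.one_of_mem_closedBall (mem_closedBall_self χ.rIn_pos.le)
  exact h_one ▸ one_ne_zero

lemma exists_hasC1Bound_ellipticField (χ : ContDiffBump (0 : ℝ)) (M : ℝ) :
    ∃ K, ∀ P : E →L[ℝ] E, ‖P‖ ≤ M → (∀ v, χ.rOut * ‖v‖ ^ 2 ≤ ⟪P v, v⟫) →
      HasC1Bound K (ellipticField χ P) := by
  have h_contDiff := contDiff_ellipticField (E := E) (χ.contDiff (n := ⊤))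
  have h_cont : Continuous fun Pz : (E →L[ℝ] E) × E =>
      (ellipticField χ Pz.1 Pz.2, fderiv ℝ (ellipticField χ Pz.1) Pz.2) :=
    h_contDiff.continuous.prodMk <| (ContDiff.fderiv (n := 0)
      (f := fun Pz z => ellipticField χ Pz.1 z)
      (h_contDiff.comp (contDiff_fst.fst.prodMk contDiff_snd)) contDiff_snd (by simp)).continuous
  obtain ⟨K, hK⟩ := ((isCompact_closedBall (0 : E →L[ℝ] E) M).prod
    (isCompact_closedBall (0 : E) 1)).exists_bound_of_continuousOn h_cont.continuousOn
  refine ⟨max K 0, fun P hP hPχ z => ?_⟩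
  by_cases hz : z ∈ closedBall 0 1
  · have h_le := (hK (P, z) ⟨mem_closedBall_zero_iff.2 hP, hz⟩).trans (le_max_left K 0)
    exact ⟨(norm_fst_le _).trans h_le, (norm_snd_le _).trans h_le⟩
  · have h_bump := isMeanZeroBump_ellipticField hPχ
    rw [h_bump.eq_zero hz, h_bump.fderiv_eq_zero hz, norm_zero, norm_zero]
    exact ⟨le_max_right _ _, le_max_right _ _⟩

/-- An averaging kernel `ψ` and a vector field `Φ` for which the scale derivative of the
`ψ`-averages of a gradient is `-t⁻¹` times the flux of `Φ` for the constant coefficient `Q`. -/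
structure IsAdaptedKernel (Q : E →L[ℝ] E) (ψ : E → ℝ) (Φ : E → E) : Prop where
  contDiff_kernel : ContDiff ℝ (⊤ : ℕ∞) ψ
  tsupport_kernel_subset : tsupport ψ ⊆ closedBall 0 1
  isMeanZeroBump : IsMeanZeroBump 1 Φ
  fderiv_apply : ∀ z v, fderiv ℝ Φ z (Q v) = ψ z • v + ⟪v, z⟫ • gradient ψ z

theorem exists_adaptedKernel_family {lam : ℝ} (hlam : 0 < lam) {Lam : ℝ} (hLam : 0 < Lam) :
    ∃ (ψ : (E →L[ℝ] E) → E → ℝ) (Φ : (E →L[ℝ] E) → E → E) (K : ℝ),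
      ∀ Q, IsElliptic lam Lam Q → IsAdaptedKernel Q (ψ Q) (Φ Q) ∧ 0 < ∫ z, ψ Q z ∧
        HasC1Bound K (Φ Q) ∧
        ∀ Q', IsElliptic lam Lam Q' → ∀ z, |ψ Q z - ψ Q' z| ≤ K * ‖Q - Q'‖ := by
  have hμ : 0 < lam / Lam ^ 2 := by positivity
  let χ : ContDiffBump (0 : ℝ) := ⟨lam / Lam ^ 2 / 2, lam / Lam ^ 2, half_pos hμ, half_lt_self hμ⟩
  obtain ⟨K, hK⟩ := exists_hasC1Bound_ellipticField (E := E) χ lam⁻¹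
  obtain ⟨C, hC⟩ := exists_abs_ellipticKernel_sub_le (E := E) χ
  refine ⟨fun Q => ellipticKernel χ Q.inverse, fun Q => ellipticField χ Q.inverse,
    max K (|C| * (lam⁻¹ * lam⁻¹)), fun Q hQ => ?_⟩
  have hχ : ∀ Q : E →L[ℝ] E, IsElliptic lam Lam Q → ∀ v, χ.rOut * ‖v‖ ^ 2 ≤ ⟪Q.inverse v, v⟫ :=
    fun _ hQ => hQ.coercive_inverse hlam
  refine ⟨⟨contDiff_ellipticKernel χ.contDiff _, tsupport_ellipticKernel_subset (hχ Q hQ),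
    isMeanZeroBump_ellipticField (hχ Q hQ), ?_⟩, integral_ellipticKernel_pos (hχ Q hQ),
    (hK _ (hQ.norm_inverse_le hlam) (hχ Q hQ)).mono (le_max_left _ _), fun Q' hQ' z => ?_⟩
  · exact fderiv_ellipticField_apply (hQ.inner_inverse_left hlam)
      ((χ.contDiff (n := 1)).differentiable one_ne_zero) (hQ.isInvertible hlam).inverse_apply_self
  · calc |ellipticKernel χ Q.inverse z - ellipticKernel χ Q'.inverse z|
        ≤ C * ‖Q.inverse - Q'.inverse‖ := hC _ _ (hχ Q hQ) (hχ Q' hQ') z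
      _ ≤ |C| * (lam⁻¹ * lam⁻¹ * ‖Q - Q'‖) := by
          gcongr
          · exact le_abs_self C
          · exact hQ.norm_inverse_sub_inverse_le hQ' hlam
      _ ≤ max K (|C| * (lam⁻¹ * lam⁻¹)) * ‖Q - Q'‖ := by
          rw [← mul_assoc]
          gcongr
          exact le_max_right _ _

end EllipticKernel

lemma add_smul_mem_closedBall {E : Type*} [NormedAddCommGroup E]
    [NormedSpace ℝ E] {x y z : E} {t R r : ℝ} (ht : 0 ≤ t)
    (hy : y ∈ closedBall x r) (hz : z ∈ closedBall (0 : E) R) :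
    y + t • z ∈ closedBall x (r + R * t) := by
  rw [mem_closedBall_zero_iff] at hz
  rw [mem_closedBall, dist_eq_norm] at hy ⊢
  calc ‖y + t • z - x‖ = ‖(y - x) + t • z‖ := by congr 1; abel
    _ ≤ ‖y - x‖ + ‖t • z‖ := norm_add_le _ _
    _ ≤ r + R * t := by
      rw [norm_smul, Real.norm_of_nonneg ht, mul_comm R]
      gcongr

section KernelAverage

variable {E : Type*} [NormedAddCommGroup E] [InnerProductSpace ℝ E] [FiniteDimensional ℝ E]
  [MeasurableSpace E] [BorelSpace E] {F : Type*} [NormedAddCommGroup F] [NormedSpace ℝ F]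

lemma norm_integral_le_of_norm_le_closedBall {g : E → F} {M R : ℝ}
    (h_zero : ∀ z ∉ closedBall 0 R, g z = 0) (h_le : ∀ z ∈ closedBall 0 R, ‖g z‖ ≤ M) :
    ‖∫ z, g z‖ ≤ M * volume.real (closedBall (0 : E) R) := by
  rw [← setIntegral_eq_integral_of_forall_compl_eq_zero h_zero]
  exact norm_setIntegral_le_of_norm_le_const measure_closedBall_lt_top h_le

/-- The average of `V` about `y` at scale `t`, weighted by the kernel `ψ`, whose integral need
not be `1`. -/
noncomputable def kernelAverage (ψ : E → ℝ) (V : E → F) (t : ℝ) (y : E) : F :=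
  ∫ z, ψ z • V (y + t • z)

lemma integrable_kernel_smul {ψ : E → ℝ} (hψ : Continuous ψ) (hc : HasCompactSupport ψ) {V : E → F}
    (hV : Continuous V) (t : ℝ) (y : E) : Integrable fun z => ψ z • V (y + t • z) :=
  Continuous.integrable_of_hasCompactSupport (by fun_prop) hc.smul_right

lemma continuous_kernelAverage {ψ : E → ℝ} (hψ : Continuous ψ) (hc : HasCompactSupport ψ)
    {V : E → F} (hV : Continuous V) (y : E) : Continuous fun t => kernelAverage ψ V t y := by
  rw [← continuousOn_univ]
  refine continuousOn_integral_of_compact_support hc (Continuous.continuousOn ?_)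
    fun t z _ hz => ?_
  · exact (hψ.comp continuous_snd).smul
      (hV.comp (continuous_const.add (continuous_fst.smul continuous_snd)))
  · rw [image_eq_zero_of_notMem_tsupport hz, zero_smul]

lemma kernelAverage_zero [CompleteSpace F] (ψ : E → ℝ) (V : E → F) (y : E) :
    kernelAverage ψ V 0 y = (∫ z, ψ z) • V y := by
  simp only [kernelAverage, zero_smul, add_zero, integral_smul_const]

lemma kernelAverage_add (ψ : E → ℝ) (V : E → F) {t : ℝ} (ht : t ≠ 0) (y h : E) :
    kernelAverage ψ V t (y + h) = kernelAverage (fun z => ψ (z - t⁻¹ • h)) V t y := by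
  rw [kernelAverage, kernelAverage, ← integral_sub_right_eq_self _ (t⁻¹ • h)]
  congr! 4
  rw [smul_sub, smul_inv_smul₀ ht]
  abel

lemma norm_kernelAverage_sub_kernelAverage_le {ψ ψ' : E → ℝ} {V : E → F} {t ε B : ℝ} {y : E}
    (hψ : Continuous ψ) (hψ_supp : tsupport ψ ⊆ closedBall 0 1) (hψ' : Continuous ψ')
    (hψ'_supp : tsupport ψ' ⊆ closedBall 0 1) (hV : Continuous V) (ht : 0 ≤ t)
    (h_sub : ∀ z, |ψ z - ψ' z| ≤ ε) (hB : ∀ x ∈ closedBall y t, ‖V x‖ ≤ B) :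
    ‖kernelAverage ψ V t y - kernelAverage ψ' V t y‖
      ≤ ε * B * volume.real (closedBall (0 : E) 1) := by
  rw [kernelAverage, kernelAverage, ← integral_sub
    (integrable_kernel_smul hψ (hasCompactSupport_of_tsupport_subset_closedBall hψ_supp) hV t y)
    (integrable_kernel_smul hψ' (hasCompactSupport_of_tsupport_subset_closedBall hψ'_supp) hV t y)]
  refine norm_integral_le_of_norm_le_closedBall (fun z hz => ?_) fun z hz => ?_
  · rw [image_eq_zero_of_notMem_tsupport fun h => hz (hψ_supp h),
      image_eq_zero_of_notMem_tsupport fun h => hz (hψ'_supp h), sub_self]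
  · rw [← sub_smul, norm_smul]
    have h_mem := add_smul_mem_closedBall ht (mem_closedBall_self le_rfl) hz (x := y)
    rw [zero_add, one_mul] at h_mem
    exact mul_le_mul (h_sub z) (hB _ h_mem) (norm_nonneg _) ((abs_nonneg _).trans (h_sub z))

lemma integrable_smulRight_fderiv {ψ : E → ℝ} (hψ : ContDiff ℝ 1 ψ) (hc : HasCompactSupport ψ)
    {V : E → F} (hV : Continuous V) : Integrable fun z => (fderiv ℝ ψ z).smulRight (V z) := by
  have hψ' := hψ.continuous_fderiv one_ne_zero
  refine Continuous.integrable_of_hasCompactSupport ?_ ((hc.fderiv ℝ).mono fun z hz => ?_)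
  · exact (ContinuousLinearMap.smulRightL ℝ E F).continuous₂.comp (hψ'.prodMk hV)
  · contrapose! hz
    simp [Function.notMem_support.1 hz]

lemma kernelAverage_add_sub_sub_eq_integral {ψ : E → ℝ} (hψ : ContDiff ℝ 1 ψ)
    (hc : HasCompactSupport ψ) {V : E → F} (hV : Continuous V) {t : ℝ} (ht : t ≠ 0) (y h : E) :
    kernelAverage ψ V t (y + h) - kernelAverage ψ V t y
      - (-(t⁻¹ • ∫ z, (fderiv ℝ ψ z).smulRight (V (y + t • z)))) h
      = ∫ z, (ψ (z - t⁻¹ • h) - ψ z - fderiv ℝ ψ z (-(t⁻¹ • h))) • V (y + t • z) := by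
  have h_int := integrable_smulRight_fderiv (V := fun z => V (y + t • z)) hψ hc (by fun_prop)
  have h_int₀ := integrable_kernel_smul hψ.continuous hc hV t y
  have h_int₁ : Integrable fun z => ψ (z - t⁻¹ • h) • V (y + t • z) := integrable_kernel_smul
    (by fun_prop) (hc.comp_homeomorph (Homeomorph.subRight _)) hV t y
  have h_int₂ := h_int.apply_continuousLinearMap (-(t⁻¹ • h))
  simp only [ContinuousLinearMap.smulRight_apply] at h_int₂
  simp_rw [sub_smul]
  rw [integral_sub (by exact h_int₁.sub h_int₀) h_int₂, integral_sub h_int₁ h_int₀,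
    kernelAverage_add ψ V ht, kernelAverage, kernelAverage]
  congr 1
  rw [_root_.neg_apply, _root_.smul_apply, ContinuousLinearMap.integral_apply h_int]
  simp only [ContinuousLinearMap.smulRight_apply, map_neg, map_smul, neg_smul, smul_assoc,
    integral_neg, integral_smul]

lemma exists_norm_kernelAverage_add_sub_le {ψ : E → ℝ} (hψ : ContDiff ℝ 2 ψ) {R : ℝ}
    (hψ_supp : tsupport ψ ⊆ closedBall 0 R) {V : E → F} (hV : Continuous V) {t : ℝ} (ht : 0 < t)
    (y : E) : ∃ (L : E →L[ℝ] F) (C : ℝ), 0 ≤ C ∧ ∀ h, ‖h‖ ≤ t →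
      ‖kernelAverage ψ V t (y + h) - kernelAverage ψ V t y - L h‖ ≤ C * ‖h‖ ^ 2 := by
  have hc : HasCompactSupport ψ := hasCompactSupport_of_tsupport_subset_closedBall hψ_supp
  have hVt : Continuous fun z => V (y + t • z) := by fun_prop
  obtain ⟨C, hC⟩ := exists_norm_comp_sub_sub_le_of_hasCompactSupport hψ hc
  obtain ⟨B, hB⟩ := (isCompact_closedBall (0 : E) (R + 1)).exists_bound_of_continuousOn
    hVt.continuousOn
  set c := volume.real (closedBall (0 : E) (R + 1))
  refine ⟨-(t⁻¹ • ∫ z, (fderiv ℝ ψ z).smulRight (V (y + t • z))), |C| * t⁻¹ ^ 2 * |B| * c,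
    by positivity, fun h hh => ?_⟩
  set w := t⁻¹ • h with hw_def
  have hw_norm : ‖w‖ = t⁻¹ * ‖h‖ := by
    rw [hw_def, norm_smul, norm_inv, Real.norm_of_nonneg ht.le]
  have hw : ‖w‖ ≤ 1 := by rwa [hw_norm, inv_mul_le_one₀ ht]
  rw [kernelAverage_add_sub_sub_eq_integral (hψ.of_le one_le_two) hc hV ht.ne']
  refine (norm_integral_le_of_norm_le_closedBall (M := |C| * ‖w‖ ^ 2 * |B|) (R := R + 1)
    (fun z hz => ?_) fun z hz => ?_).trans_eq ?_
  · have hz₁ : z ∉ tsupport ψ := fun h =>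
      hz (closedBall_subset_closedBall (by linarith) (hψ_supp h))
    have hz₂ : z - w ∉ tsupport ψ := fun h => hz <| by
      have h_mem := add_smul_mem_closedBall zero_le_one (hψ_supp h)
        (mem_closedBall_zero_iff.2 hw)
      rwa [one_smul, sub_add_cancel, mul_one] at h_mem
    rw [image_eq_zero_of_notMem_tsupport hz₁, image_eq_zero_of_notMem_tsupport hz₂,
      fderiv_of_notMem_tsupport ℝ hz₁, _root_.zero_apply, sub_zero, sub_zero, zero_smul]
  · rw [norm_smul]
    gcongr
    · exact (hC z w).trans (by gcongr; exact le_abs_self C)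
    · exact (hB z hz).trans (le_abs_self B)
  · rw [hw_norm]
    ring

end KernelAverage

section Flux

variable {E : Type*} [NormedAddCommGroup E] [InnerProductSpace ℝ E] [FiniteDimensional ℝ E]
  [MeasurableSpace E] [BorelSpace E] {F : Type*} [NormedAddCommGroup F] [NormedSpace ℝ F]

/-- The weak divergence, up to sign, of the field `W`, rescaled to unit scale about `y` and tested
against `Θ`. -/
noncomputable def flux (Θ : E → F) (W : E → E) (t : ℝ) (y : E) : F :=
  ∫ z, fderiv ℝ Θ z (W (y + t • z))

variable {Θ Θ' : E → F} {W : E → E}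

lemma flux_sub (hΘ : ContDiff ℝ 1 Θ) (hc : HasCompactSupport Θ) (hΘ' : ContDiff ℝ 1 Θ')
    (hc' : HasCompactSupport Θ') (hW : Continuous W) (t : ℝ) (y : E) :
    flux (fun z => Θ z - Θ' z) W t y = flux Θ W t y - flux Θ' W t y := by
  rw [flux, flux, flux, ← integral_sub
    (integrable_fderiv_apply_of_hasCompactSupport hΘ hc (by fun_prop))
    (integrable_fderiv_apply_of_hasCompactSupport hΘ' hc' (by fun_prop))]
  congr! 2 with z
  rw [fderiv_fun_sub (hΘ.differentiable one_ne_zero z) (hΘ'.differentiable one_ne_zero z),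
    _root_.sub_apply]

lemma flux_comp_sub (Θ : E → F) (W : E → E) {t : ℝ} (ht : t ≠ 0) (y h : E) :
    flux (fun z => Θ (z - t⁻¹ • h)) W t y = flux Θ W t (y + h) := by
  rw [flux, flux, ← integral_sub_right_eq_self (fun z => fderiv ℝ Θ z _) (t⁻¹ • h)]
  congr! 2 with _
  rw [fderiv_comp_sub, smul_sub, smul_inv_smul₀ ht]
  congr 2
  abel

lemma flux_clm_comp {G : Type*} [NormedAddCommGroup G] [NormedSpace ℝ G] [CompleteSpace F]
    [CompleteSpace G] (L : F →L[ℝ] G) (hΘ : ContDiff ℝ 1 Θ) (hc : HasCompactSupport Θ)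
    (hW : Continuous W) (t : ℝ) (y : E) :
    flux (fun z => L (Θ z)) W t y = L (flux Θ W t y) := by
  rw [flux, flux, ← L.integral_comp_comm
    (integrable_fderiv_apply_of_hasCompactSupport hΘ hc (by fun_prop))]
  congr! 2 with z
  exact congrArg (· (W (y + t • z)))
    (L.hasFDerivAt.comp z (hΘ.differentiable one_ne_zero z).hasFDerivAt).fderiv

lemma continuous_flux (hΘ : ContDiff ℝ 1 Θ) (hc : HasCompactSupport Θ) (hW : Continuous W)
    (y : E) : Continuous fun t => flux Θ W t y := by
  have := hΘ.continuous_fderiv one_ne_zero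
  rw [← continuousOn_univ]
  refine continuousOn_integral_of_compact_support (hc.fderiv ℝ) (Continuous.continuousOn ?_)
    fun t z _ hz => ?_
  · simp only [Function.uncurry_def]
    fun_prop
  · rw [image_eq_zero_of_notMem_tsupport hz, _root_.zero_apply]

end Flux

section ScaleDerivative

variable {E : Type*} [NormedAddCommGroup E] [InnerProductSpace ℝ E] [FiniteDimensional ℝ E]
  [MeasurableSpace E] [BorelSpace E] {U : E → ℝ}

lemma hasDerivAt_integral_smul_gradient {κ : E → ℝ} (hU : ContDiff ℝ 1 U) (hκ : ContDiff ℝ 1 κ)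
    (hc : HasCompactSupport κ) (y : E) (t : ℝ) :
    HasDerivAt (fun t : ℝ => ∫ z, U (y + t • z) • gradient κ z)
      (∫ z, ⟪gradient U (y + t • z), z⟫ • gradient κ z) t := by
  have hUc := hU.continuous
  have hgc := continuous_gradient_of_contDiff hU
  have hgκ := continuous_gradient_of_contDiff hκ
  have hcg := hasCompactSupport_gradient hc
  obtain ⟨M, hM⟩ := ((isCompact_Icc (a := t - 1) (b := t + 1)).prod
    hcg.isCompact).exists_bound_of_continuousOn
      (f := fun p : ℝ × E => ⟪gradient U (y + p.1 • p.2), p.2⟫ • gradient κ p.2) (by fun_prop)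
  refine (hasDerivAt_integral_of_dominated_loc_of_deriv_le
    (F := fun (t : ℝ) z => U (y + t • z) • gradient κ z)
    (F' := fun (t : ℝ) z => ⟪gradient U (y + t • z), z⟫ • gradient κ z)
    (bound := (tsupport (gradient κ)).indicator fun _ => M)
    (s := Set.Icc (t - 1) (t + 1))
    (Icc_mem_nhds (by linarith) (by linarith : t < t + 1))
    (Eventually.of_forall fun s => Continuous.aestronglyMeasurable (by fun_prop))
    (Continuous.integrable_of_hasCompactSupport (by fun_prop) hcg.smul_left)
    (Continuous.aestronglyMeasurable (by fun_prop))
    (Eventually.of_forall fun z s hs => ?_) ?_ (Eventually.of_forall fun z s _ => ?_)).2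
  · by_cases hz : z ∈ tsupport (gradient κ)
    · rw [Set.indicator_of_mem hz]
      exact hM (s, z) ⟨hs, hz⟩
    · rw [Set.indicator_of_notMem hz, image_eq_zero_of_notMem_tsupport hz, smul_zero, norm_zero]
  · rw [integrable_indicator_iff (isClosed_tsupport _).measurableSet]
    exact integrableOn_const hcg.isCompact.measure_lt_top.ne
  · have h_line : HasDerivAt (fun s : ℝ => y + s • z) z s := by
      simpa using ((hasDerivAt_id s).smul_const z).const_add y
    rw [inner_gradient_left]
    exact ((hU.differentiable one_ne_zero _).hasFDerivAt.comp_hasDerivAt s h_line).smul_const _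

lemma hasDerivAt_kernelAverage_gradient {ψ : E → ℝ} (hU : ContDiff ℝ 1 U) (hψ : ContDiff ℝ 1 ψ)
    (hc : HasCompactSupport ψ) (y : E) {t : ℝ} (ht : 0 < t) :
    HasDerivAt (fun t => kernelAverage ψ (gradient U) t y)
      (-t⁻¹ • (kernelAverage ψ (gradient U) t y
        + ∫ z, ⟪gradient U (y + t • z), z⟫ • gradient ψ z)) t := by
  have h_ibp : ∀ s : ℝ, 0 < s → kernelAverage ψ (gradient U) s y
      = -s⁻¹ • ∫ z, U (y + s • z) • gradient ψ z := by
    intro s hs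
    rw [neg_smul, ← smul_neg, ← smul_integral_smul_gradient hU hψ hc y s, inv_smul_smul₀ hs.ne']
    rfl
  have h_prod := (hasDerivAt_inv ht.ne').neg.smul (hasDerivAt_integral_smul_gradient hU hψ hc y t)
  refine (h_prod.congr_of_eventuallyEq ?_).congr_deriv ?_
  · filter_upwards [lt_mem_nhds ht] with s hs using h_ibp s hs
  · rw [h_ibp t ht]
    simp only [Pi.neg_apply, smul_add, smul_smul]
    rw [add_comm]
    congr 2
    field_simp

lemma IsAdaptedKernel.hasCompactSupport_kernel {Q : E →L[ℝ] E} {ψ : E → ℝ} {Φ : E → E}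
    (hk : IsAdaptedKernel Q ψ Φ) : HasCompactSupport ψ :=
  hasCompactSupport_of_tsupport_subset_closedBall hk.tsupport_kernel_subset

lemma IsAdaptedKernel.hasDerivAt_kernelAverage {A : E →L[ℝ] E} {ψ : E → ℝ} {Φ : E → E}
    (hk : IsAdaptedKernel (symPart A) ψ Φ) (hU : ContDiff ℝ 1 U) (y : E) {t : ℝ} (ht : 0 < t) :
    HasDerivAt (fun t => kernelAverage ψ (gradient U) t y)
      (-t⁻¹ • flux Φ (fun x => A (gradient U x)) t y) t := by
  have hψ : ContDiff ℝ 1 ψ := contDiff_infty.1 hk.contDiff_kernel 1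
  have hV := continuous_gradient_of_contDiff hU
  have hψ' := continuous_gradient_of_contDiff hψ
  have h_int : Integrable fun z => ⟪gradient U (y + t • z), z⟫ • gradient ψ z :=
    Continuous.integrable_of_hasCompactSupport (by fun_prop)
      (hasCompactSupport_gradient hk.hasCompactSupport_kernel).smul_left
  refine (hasDerivAt_kernelAverage_gradient hU hψ hk.hasCompactSupport_kernel y ht).congr_deriv ?_
  rw [flux, ← integral_fderiv_symPart_gradient hU (contDiff_infty.1 hk.isMeanZeroBump.contDiff 2)
    hk.isMeanZeroBump.hasCompactSupport A y ht.ne', kernelAverage, ← integral_add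
    (integrable_kernel_smul hψ.continuous hk.hasCompactSupport_kernel hV t y) h_int]
  simp_rw [hk.fderiv_apply]

end ScaleDerivative

section Holder

variable {E F : Type*} [SeminormedAddCommGroup E] [SeminormedAddCommGroup F]

/-- Hölder continuity on `s` with exponent `α` and constant `M`. -/
def IsHolderOn (M α : ℝ) (g : E → F) (s : Set E) : Prop :=
  ∀ x ∈ s, ∀ y ∈ s, ‖g x - g y‖ ≤ M * ‖x - y‖ ^ α

end Holder

section Absorption

variable {E F : Type*} [SeminormedAddCommGroup E] [SeminormedAddCommGroup F] {V : E → F} {x₀ : E}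
  {R ρ b C : ℝ}

lemma norm_le_mul_max_of_absorption {ε : ℝ} (hε : ε ∈ Set.Ioc 0 ρ) (hC : 0 ≤ C)
    (hb : ∀ y ∈ closedBall x₀ R, ‖V y‖ ≤ b) (hb₀ : 0 ≤ b)
    (h_absorb : ∀ a, 0 ≤ a → (∀ y ∈ closedBall x₀ R, ‖V y‖ ≤ a * max ‖y - x₀‖ ε) →
      ∀ y ∈ closedBall x₀ ρ, ‖V y‖ ≤ (a / 2 + C) * max ‖y - x₀‖ ε)
    {y : E} (hy : y ∈ closedBall x₀ R) : ‖V y‖ ≤ (2 * C + b / ρ) * max ‖y - x₀‖ ε := by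
  have hρ : 0 < ρ := hε.1.trans_le hε.2
  have h_iter : ∀ n : ℕ, ∀ y ∈ closedBall x₀ R,
      ‖V y‖ ≤ (2 * C + b / ρ + b / ε * (1 / 2) ^ n) * max ‖y - x₀‖ ε := by
    intro n
    have h_nonneg : ∀ n : ℕ, 0 ≤ b / ε * (1 / 2) ^ n := fun n =>
      mul_nonneg (div_nonneg hb₀ hε.1.le) (by positivity)
    have h_div : 0 ≤ b / ρ := by positivity
    induction n with
    | zero =>
      intro y hy
      calc ‖V y‖ ≤ b / ε * ε := by rw [div_mul_cancel₀ _ hε.1.ne']; exact hb y hy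
        _ ≤ (2 * C + b / ρ + b / ε * (1 / 2) ^ 0) * max ‖y - x₀‖ ε := by
          refine mul_le_mul ?_ (le_max_right _ _) hε.1.le (by linarith [h_nonneg 0])
          linarith
    | succ n ih =>
      intro y hy
      by_cases hyρ : y ∈ closedBall x₀ ρ
      · refine (h_absorb _ (by linarith [h_nonneg n]) ih y hyρ).trans ?_
        refine mul_le_mul_of_nonneg_right ?_ (hε.1.le.trans (le_max_right _ _))
        rw [pow_succ]
        linarith
      · rw [mem_closedBall, dist_eq_norm, not_le] at hyρ
        calc ‖V y‖ ≤ b / ρ * ρ := by rw [div_mul_cancel₀ _ hρ.ne']; exact hb y hy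
          _ ≤ (2 * C + b / ρ + b / ε * (1 / 2) ^ (n + 1)) * max ‖y - x₀‖ ε := by
            refine mul_le_mul ?_ (hyρ.le.trans (le_max_left _ _)) hρ.le ?_ <;>
              linarith [h_nonneg (n + 1)]
  have h_lim : Tendsto (fun n : ℕ => (2 * C + b / ρ + b / ε * (1 / 2) ^ n) * max ‖y - x₀‖ ε)
      atTop (𝓝 ((2 * C + b / ρ + b / ε * 0) * max ‖y - x₀‖ ε)) :=
    (((tendsto_pow_atTop_nhds_zero_of_lt_one (by norm_num) (by norm_num)).const_mul _).const_add
      _).mul_const _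
  rw [mul_zero, add_zero] at h_lim
  exact ge_of_tendsto' h_lim fun n => h_iter n y hy

lemma exists_norm_le_mul_norm_sub_of_absorption (hρ : 0 < ρ) (hR : 0 ≤ R) (hC : 0 ≤ C)
    (hb : ∀ y ∈ closedBall x₀ R, ‖V y‖ ≤ b)
    (h_absorb : ∀ ε ∈ Set.Ioc 0 ρ, ∀ a, 0 ≤ a →
      (∀ y ∈ closedBall x₀ R, ‖V y‖ ≤ a * max ‖y - x₀‖ ε) →
      ∀ y ∈ closedBall x₀ ρ, ‖V y‖ ≤ (a / 2 + C) * max ‖y - x₀‖ ε) :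
    ∃ a, 0 ≤ a ∧ ∀ y ∈ closedBall x₀ R, ‖V y‖ ≤ a * ‖y - x₀‖ := by
  have hb₀ : 0 ≤ b := (norm_nonneg _).trans (hb x₀ (mem_closedBall_self hR))
  refine ⟨2 * C + b / ρ, by positivity, fun y hy => ?_⟩
  have h_lim : Tendsto (fun ε => (2 * C + b / ρ) * max ‖y - x₀‖ ε) (𝓝[>] 0)
      (𝓝 ((2 * C + b / ρ) * max ‖y - x₀‖ 0)) :=
    ((by fun_prop : Continuous fun ε : ℝ => (2 * C + b / ρ) * max ‖y - x₀‖ ε).tendsto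
      0).mono_left nhdsWithin_le_nhds
  rw [max_eq_left (norm_nonneg _)] at h_lim
  refine ge_of_tendsto h_lim ?_
  filter_upwards [Ioc_mem_nhdsGT hρ] with ε hε
  exact norm_le_mul_max_of_absorption hε hC hb hb₀ (h_absorb ε hε) hy

end Absorption

section FrozenFlux

variable {E : Type*} [NormedAddCommGroup E] [InnerProductSpace ℝ E] [FiniteDimensional ℝ E]
  [MeasurableSpace E] [BorelSpace E]

/-- The smallness of the fluxes of `A x₁ ∘ V` about the points `x₁` near `x₀` that results from
freezing the leading coefficients of the equation at `x₁`. -/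
def HasFrozenFluxBound (C α r : ℝ) (A : E → E →L[ℝ] E) (V : E → E) (x₀ : E) : Prop :=
  ∀ x₁ ∈ closedBall x₀ r, ∀ t ∈ Set.Ioc 0 r, ∀ (κ : E → ℝ) (K : ℝ), IsMeanZeroBump 2 κ →
    HasC1Bound K κ → ∀ B, (∀ y ∈ closedBall x₁ (2 * t), ‖V y‖ ≤ B) →
      |flux κ (fun y => A x₁ (V y)) t x₁| ≤ C * K * (t ^ α * (B + t))

variable {F : Type*} [NormedAddCommGroup F] [NormedSpace ℝ F] {C α r : ℝ}
  {A : E → E →L[ℝ] E} {V : E → E} {x₀ : E}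

lemma HasFrozenFluxBound.norm_flux_le [CompleteSpace F] (hflux : HasFrozenFluxBound C α r A V x₀)
    (hC : 0 ≤ C) (hV : Continuous V) {x₁ : E} (hx₁ : x₁ ∈ closedBall x₀ r) {t : ℝ}
    (ht : t ∈ Set.Ioc 0 r) {Θ : E → F} {K : ℝ} (hΘ : IsMeanZeroBump 2 Θ) (hK : HasC1Bound K Θ)
    {B : ℝ} (hB : ∀ y ∈ closedBall x₁ (2 * t), ‖V y‖ ≤ B) :
    ‖flux Θ (fun y => A x₁ (V y)) t x₁‖ ≤ C * K * (t ^ α * (B + t)) := by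
  have ht₀ : 0 < t := ht.1
  have hB₀ : 0 ≤ B := (norm_nonneg _).trans (hB x₁ (mem_closedBall_self (by positivity)))
  have hK₀ := hK.nonneg
  have hΘ₁ : ContDiff ℝ 1 Θ := contDiff_infty.1 hΘ.contDiff 1
  refine NormedSpace.norm_le_dual_bound ℝ _ (by positivity) fun L => ?_
  rw [← flux_clm_comp L hΘ₁ hΘ.hasCompactSupport (by fun_prop)]
  refine (hflux x₁ hx₁ t ht _ _ (hΘ.clm_comp L)
    (hK.clm_comp (hΘ₁.differentiable one_ne_zero) L) B hB).trans_eq ?_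
  ring

variable {U : E → ℝ}

lemma HasFrozenFluxBound.norm_kernelAverage_sub_le
    (hflux : HasFrozenFluxBound C α r A (gradient U) x₀) (hC : 0 ≤ C) (hα : 0 < α)
    (hU : ContDiff ℝ 1 U) {y : E} (hy : y ∈ closedBall x₀ r) {ψ : E → ℝ} {Φ : E → E}
    (hk : IsAdaptedKernel (symPart (A y)) ψ Φ) {K : ℝ} (hK : HasC1Bound K Φ) {t : ℝ}
    (ht : t ∈ Set.Ioc 0 r) {B : ℝ} (hB : ∀ x ∈ closedBall y (2 * t), ‖gradient U x‖ ≤ B) :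
    ‖kernelAverage ψ (gradient U) t y - (∫ z, ψ z) • gradient U y‖
      ≤ C * K / α * (t ^ α * (B + t)) := by
  have hV := continuous_gradient_of_contDiff hU
  have hψ := hk.contDiff_kernel.continuous
  have hK₀ := hK.nonneg
  have hB₀ : 0 ≤ B := (norm_nonneg _).trans (hB y (mem_closedBall_self (by linarith [ht.1])))
  have h_deriv_le : ∀ τ ∈ Set.Ioc 0 t,
      ‖-τ⁻¹ • flux Φ (fun x => A y (gradient U x)) τ y‖ ≤ C * K * (B + t) * τ ^ (α - 1) := by
    rintro τ ⟨hτ, hτt⟩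
    refine norm_neg_inv_smul_le_rpow hτ ((hflux.norm_flux_le hC hV hy ⟨hτ, hτt.trans ht.2⟩
      (hk.isMeanZeroBump.mono one_le_two) hK fun x hx =>
        hB x (closedBall_subset_closedBall (by linarith) hx)).trans ?_)
    calc C * K * (τ ^ α * (B + τ)) = C * K * (B + τ) * τ ^ α := by ring
      _ ≤ C * K * (B + t) * τ ^ α := by gcongr
  have h_scale : ∀ s ∈ Set.Ioc 0 t, ‖kernelAverage ψ (gradient U) t y
      - kernelAverage ψ (gradient U) s y‖ ≤ C * K / α * (t ^ α * (B + t)) := by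
    rintro s ⟨hs, hst⟩
    have h_sub := norm_sub_le_of_norm_hasDerivAt_le_rpow hs hst hα.ne'
      (fun τ hτ => hk.hasDerivAt_kernelAverage hU y (hs.trans_le hτ.1))
      fun τ hτ => h_deriv_le τ ⟨hs.trans_le hτ.1, hτ.2⟩
    have ht₀ := ht.1
    calc _ ≤ C * K * (B + t) * ((t ^ α - s ^ α) / α) := h_sub
      _ ≤ C * K * (B + t) * (t ^ α / α) := by
        gcongr
        exact sub_le_self _ (by positivity)
      _ = C * K / α * (t ^ α * (B + t)) := by ring
  rw [← kernelAverage_zero]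
  have h_lim := ((continuous_const (y := kernelAverage ψ (gradient U) t y)).sub
    (continuous_kernelAverage hψ hk.hasCompactSupport_kernel hV y)).norm.tendsto 0
  exact le_of_tendsto (h_lim.mono_left nhdsWithin_le_nhds)
    (by filter_upwards [Ioc_mem_nhdsGT ht.1] with s hs using h_scale s hs)

end FrozenFlux

section AveragingScheme

lemma norm_le_three_mul_of_norm_le_mul_max {E F : Type*} [SeminormedAddCommGroup E]
    [SeminormedAddCommGroup F] {V : E → F} {x₀ : E} {a ε t ρ : ℝ} (ha₀ : 0 ≤ a)
    (ha : ∀ y ∈ closedBall x₀ (3 * ρ), ‖V y‖ ≤ a * max ‖y - x₀‖ ε) (htρ : t ≤ ρ)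
    (hεt : ε ≤ 3 * t) {x : E} (hx : x ∈ closedBall x₀ (3 * t)) : ‖V x‖ ≤ 3 * a * t := by
  refine (ha x (closedBall_subset_closedBall (by linarith) hx)).trans ?_
  rw [mul_comm 3, mul_assoc]
  gcongr
  exact max_le (by simpa [dist_eq_norm] using hx) hεt

variable {E F : Type*} [NormedAddCommGroup E] [NormedSpace ℝ E] [NormedAddCommGroup F]
  [NormedSpace ℝ F]

/-- Averages `J t y` of `V` about `y` at scale `t`, of total weight `c`, whose increments from
`x₀` have the scale derivative `g`, linearized by `g'`. If `V` grows at most linearly away from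
`x₀`, then the averages differ from `c • V` by `O(t ^ (1 + α))`. -/
structure IsAveragingScheme (C α r c : ℝ) (V : E → F) (x₀ : E) (J g : ℝ → E → F)
    (g' : ℝ → E →L[ℝ] F) : Prop where
  hasDerivAt : ∀ h t, 0 < t → HasDerivAt (fun t => J t (x₀ + h) - J t x₀) (g t h) t
  continuousOn_linear : ContinuousOn g' (Set.Ioi 0)
  exists_linearization : ∀ t, 0 < t → ∃ (L : E →L[ℝ] F) (C₀ : ℝ), 0 ≤ C₀ ∧ ∀ h, ‖h‖ ≤ t →
    ‖J t (x₀ + h) - J t x₀ - L h‖ ≤ C₀ * ‖h‖ ^ 2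
  norm_sub_smul_le : ∀ t ∈ Set.Ioc 0 r, ∀ a, (∀ x ∈ closedBall x₀ (3 * t), ‖V x‖ ≤ a * t) →
    ∀ y ∈ closedBall x₀ t, ‖J t y - c • V y‖ ≤ C * (a + 1) * t ^ (1 + α)
  norm_linear_le : ∀ t ∈ Set.Ioc 0 r, ∀ a, (∀ x ∈ closedBall x₀ (3 * t), ‖V x‖ ≤ a * t) →
    ‖g' t‖ ≤ C * (a + 1) * t ^ (α - 1)
  norm_sub_linear_le : ∀ t ∈ Set.Ioc 0 r, ∀ a, (∀ x ∈ closedBall x₀ (3 * t), ‖V x‖ ≤ a * t) →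
    ∀ h, ‖h‖ ≤ t → ‖g t h - g' t h‖ ≤ C * (a + 1) * ‖h‖ ^ 2 * t ^ (α - 2)

namespace IsAveragingScheme

variable {C α r c : ℝ} {V : E → F} {x₀ : E} {J g : ℝ → E → F} {g' : ℝ → E →L[ℝ] F}

lemma norm_sub_sub_smul_le (hs : IsAveragingScheme C α r c V x₀ J g g') (hV₀ : V x₀ = 0)
    {t a : ℝ} (ht : t ∈ Set.Ioc 0 r) (ha : ∀ x ∈ closedBall x₀ (3 * t), ‖V x‖ ≤ a * t) {h : E}
    (hh : ‖h‖ ≤ t) :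
    ‖J t (x₀ + h) - J t x₀ - c • V (x₀ + h)‖ ≤ 2 * (C * (a + 1) * t ^ (1 + α)) := by
  have h_center := hs.norm_sub_smul_le t ht a ha x₀ (mem_closedBall_self ht.1.le)
  rw [hV₀, smul_zero, sub_zero] at h_center
  have h_pt := hs.norm_sub_smul_le t ht a ha (x₀ + h) (by simpa using hh)
  rw [sub_right_comm, two_mul]
  exact (norm_sub_le _ _).trans (add_le_add h_pt h_center)

lemma norm_scale_derivative_le (hs : IsAveragingScheme C α r c V x₀ J g g') (hC : 0 ≤ C)
    {t a : ℝ} (ht : t ∈ Set.Ioc 0 r) (ha₀ : 0 ≤ a)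
    (ha : ∀ x ∈ closedBall x₀ (3 * t), ‖V x‖ ≤ a * t) {h : E} (hh : ‖h‖ ≤ t) :
    ‖g t h‖ ≤ 2 * (C * (a + 1)) * ‖h‖ * t ^ (α - 1) := by
  have ht₀ := ht.1
  have h_split : t ^ (α - 1) = t * t ^ (α - 2) := by
    rw [show α - 1 = 1 + (α - 2) by ring, Real.rpow_add ht₀, Real.rpow_one]
  calc ‖g t h‖ ≤ ‖g' t h‖ + ‖g t h - g' t h‖ := norm_le_norm_add_norm_sub' _ _
    _ ≤ C * (a + 1) * t ^ (α - 1) * ‖h‖ + C * (a + 1) * (‖h‖ * t) * t ^ (α - 2) := by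
      refine add_le_add ((g' t).le_of_opNorm_le (hs.norm_linear_le t ht a ha) h)
        ((hs.norm_sub_linear_le t ht a ha h hh).trans ?_)
      rw [sq]
      gcongr
    _ = 2 * (C * (a + 1)) * ‖h‖ * t ^ (α - 1) := by rw [h_split]; ring

lemma norm_increment_sub_le (hs : IsAveragingScheme C α r c V x₀ J g g') (hC : 0 ≤ C)
    (hα : 0 < α) {s ρ a : ℝ} (hs₀ : 0 < s) (hsρ : s ≤ ρ) (hρr : ρ ≤ r) (ha₀ : 0 ≤ a)
    (ha : ∀ t ∈ Set.Icc s ρ, ∀ x ∈ closedBall x₀ (3 * t), ‖V x‖ ≤ a * t) {h : E} (hh : ‖h‖ ≤ s) :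
    ‖(J ρ (x₀ + h) - J ρ x₀) - (J s (x₀ + h) - J s x₀)‖
      ≤ 2 * (C * (a + 1)) * s * (ρ ^ α / α) := by
  refine (norm_sub_le_of_norm_hasDerivAt_le_rpow (D := 2 * (C * (a + 1)) * s) hs₀ hsρ hα.ne'
    (fun t ht => hs.hasDerivAt h t (hs₀.trans_le ht.1)) fun t ht => ?_).trans ?_
  · have ht₀ := hs₀.trans_le ht.1
    refine (hs.norm_scale_derivative_le hC ⟨ht₀, ht.2.trans hρr⟩ ha₀ (ha t ht)
      (hh.trans ht.1)).trans ?_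
    gcongr
  · gcongr
    exact sub_le_self _ (by positivity)

lemma norm_le_half_add_mul_max (hs : IsAveragingScheme C α r c V x₀ J g g') (hC : 0 ≤ C)
    (hα : 0 < α) (hc : 0 < c) (hV₀ : V x₀ = 0) {ρ : ℝ} (hρr : ρ ≤ r)
    (hρ : 3 * (2 * C * (1 + 1 / α) * ρ ^ α) ≤ c / 2) {D : ℝ}
    (hD : ∀ h, ‖h‖ ≤ ρ → ‖J ρ (x₀ + h) - J ρ x₀‖ ≤ D * ‖h‖) (hD₀ : 0 ≤ D) {ε : ℝ}
    (hε : ε ∈ Set.Ioc 0 ρ) {a : ℝ} (ha₀ : 0 ≤ a)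
    (ha : ∀ y ∈ closedBall x₀ (3 * ρ), ‖V y‖ ≤ a * max ‖y - x₀‖ ε) {y : E}
    (hy : y ∈ closedBall x₀ ρ) : ‖V y‖ ≤ (a / 2 + (1 / 6 + D / c)) * max ‖y - x₀‖ ε := by
  obtain ⟨h, rfl⟩ : ∃ h, y = x₀ + h := ⟨y - x₀, by abel⟩
  rw [add_sub_cancel_left]
  have hhρ : ‖h‖ ≤ ρ := by simpa using hy
  set s := max ‖h‖ ε
  have hεs : ε ≤ s := le_max_right _ _
  have hhs : ‖h‖ ≤ s := le_max_left _ _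
  have hs₀ : 0 < s := hε.1.trans_le hεs
  have hsρ : s ≤ ρ := max_le hhρ hε.2
  have ha' : ∀ t ∈ Set.Icc s ρ, ∀ x ∈ closedBall x₀ (3 * t), ‖V x‖ ≤ 3 * a * t := fun t ht =>
    fun _ => norm_le_three_mul_of_norm_le_mul_max ha₀ ha ht.2 (by linarith [ht.1])
  have h_pt := hs.norm_sub_sub_smul_le hV₀ ⟨hs₀, hsρ.trans hρr⟩ (ha' s ⟨le_rfl, hsρ⟩) hhs
  have h_scale := hs.norm_increment_sub_le hC hα hs₀ hsρ hρr (by positivity) ha' hhs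
  have h_smul : c * ‖V (x₀ + h)‖ ≤ (2 * C * (1 + 1 / α) * ρ ^ α * (3 * a + 1) + D) * s := by
    calc c * ‖V (x₀ + h)‖ = ‖(J ρ (x₀ + h) - J ρ x₀)
          - ((J ρ (x₀ + h) - J ρ x₀) - (J s (x₀ + h) - J s x₀))
          - (J s (x₀ + h) - J s x₀ - c • V (x₀ + h))‖ := by
          rw [← Real.norm_of_nonneg hc.le, ← norm_smul, Real.norm_of_nonneg hc.le]
          congr 1
          abel
      _ ≤ D * s + 2 * (C * (3 * a + 1)) * s * (ρ ^ α / α)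
          + 2 * (C * (3 * a + 1) * (ρ ^ α * s)) := by
          refine (norm_sub_le _ _).trans (add_le_add ((norm_sub_le _ _).trans
            (add_le_add ((hD h hhρ).trans (by gcongr)) h_scale)) (h_pt.trans ?_))
          rw [add_comm 1 α, Real.rpow_add hs₀, Real.rpow_one]
          gcongr
      _ = _ := by ring
  refine le_of_mul_le_mul_left (h_smul.trans ?_) hc
  calc _ ≤ (c / 6 * (3 * a + 1) + D) * s := by gcongr; linarith
    _ = c * ((a / 2 + (1 / 6 + D / c)) * s) := by field_simp; ring

lemma exists_norm_le_mul_norm_sub (hs : IsAveragingScheme C α r c V x₀ J g g') (hC : 0 ≤ C)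
    (hα : 0 < α) (hc : 0 < c) (hr : 0 < r) (hV₀ : V x₀ = 0) {b : ℝ}
    (hb : ∀ y ∈ closedBall x₀ (3 * r), ‖V y‖ ≤ b) :
    ∃ ρ ∈ Set.Ioc 0 r, ∃ a, 0 ≤ a ∧ ∀ y ∈ closedBall x₀ (3 * ρ), ‖V y‖ ≤ a * ‖y - x₀‖ := by
  have h_lim : Tendsto (fun ρ : ℝ => 3 * (2 * C * (1 + 1 / α) * ρ ^ α)) (𝓝[>] 0) (𝓝 0) := by
    have h_cont : Continuous fun ρ : ℝ => 3 * (2 * C * (1 + 1 / α) * ρ ^ α) := by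
      have := Real.continuous_rpow_const hα.le
      fun_prop
    simpa [Real.zero_rpow hα.ne'] using (h_cont.tendsto 0).mono_left nhdsWithin_le_nhds
  obtain ⟨ρ, hρ_le, hρ⟩ :=
    ((h_lim.eventually_le_const (half_pos hc)).and (Ioc_mem_nhdsGT hr)).exists
  obtain ⟨L, C₀, hC₀, hL⟩ := hs.exists_linearization ρ hρ.1
  have hρ₀ := hρ.1
  have hD : ∀ h, ‖h‖ ≤ ρ → ‖J ρ (x₀ + h) - J ρ x₀‖ ≤ (‖L‖ + C₀ * ρ) * ‖h‖ := fun h hh => by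
    calc ‖J ρ (x₀ + h) - J ρ x₀‖ ≤ ‖L h‖ + ‖J ρ (x₀ + h) - J ρ x₀ - L h‖ :=
          norm_le_norm_add_norm_sub' _ _
      _ ≤ ‖L‖ * ‖h‖ + C₀ * (ρ * ‖h‖) := by
          refine add_le_add (L.le_opNorm h) ((hL h hh).trans ?_)
          rw [sq]
          gcongr
      _ = (‖L‖ + C₀ * ρ) * ‖h‖ := by ring
  have hD₀ : 0 ≤ ‖L‖ + C₀ * ρ := by positivity
  exact ⟨ρ, hρ, exists_norm_le_mul_norm_sub_of_absorption hρ₀ (by positivity) (by positivity)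
    (fun y hy => hb y (closedBall_subset_closedBall (by linarith [hρ.2]) hy))
    fun ε hε a ha₀ ha y hy =>
      hs.norm_le_half_add_mul_max hC hα hc hV₀ hρ.2 hρ_le hD hD₀ hε ha₀ ha hy⟩

theorem exists_norm_sub_clm_le_rpow [CompleteSpace F]
    (hs : IsAveragingScheme C α r c V x₀ J g g') (hC : 0 ≤ C) (hα : α ∈ Set.Ioo (0 : ℝ) 1)
    (hc : 0 < c) (hr : 0 < r) (hV₀ : V x₀ = 0) {b : ℝ}
    (hb : ∀ y ∈ closedBall x₀ (3 * r), ‖V y‖ ≤ b) :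
    ∃ ρ > 0, ∃ (L : E →L[ℝ] F) (C' : ℝ),
      ∀ h, ‖h‖ ≤ ρ → ‖V (x₀ + h) - L h‖ ≤ C' * ‖h‖ ^ (1 + α) := by
  obtain ⟨ρ, hρ, a, ha₀, ha⟩ := hs.exists_norm_le_mul_norm_sub hC hα.1 hc hr hV₀ hb
  have ha' : ∀ t ∈ Set.Ioc 0 ρ, ∀ x ∈ closedBall x₀ (3 * t), ‖V x‖ ≤ 3 * a * t := fun t ht =>
    fun _ => norm_le_three_mul_of_norm_le_mul_max ha₀ (ε := 0) (by simpa using ha) ht.2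
      (by linarith [ht.1])
  have h_le : ∀ t ∈ Set.Ioc 0 ρ, t ∈ Set.Ioc 0 r := fun t ht => ⟨ht.1, ht.2.trans hρ.2⟩
  obtain ⟨L₀, C₀, hC₀, hL₀⟩ := hs.exists_linearization ρ hρ.1
  obtain ⟨L, C₁, hL⟩ := exists_norm_sub_le_rpow_of_scale_derivative hC₀
    (by positivity : 0 ≤ C * (3 * a + 1)) hα hs.hasDerivAt hs.continuousOn_linear
    (fun t ht => hs.norm_linear_le t (h_le t ht) _ (ha' t ht))
    (fun t ht => hs.norm_sub_linear_le t (h_le t ht) _ (ha' t ht)) hL₀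
  refine ⟨ρ, hρ.1, c⁻¹ • L, c⁻¹ * (C₁ + 2 * (C * (3 * a + 1))), fun h hh => ?_⟩
  rcases eq_or_ne h 0 with rfl | hh₀
  · simp [hV₀, Real.zero_rpow (by linarith [hα.1] : 1 + α ≠ 0)]
  have ht : ‖h‖ ∈ Set.Ioc 0 ρ := ⟨norm_pos_iff.2 hh₀, hh⟩
  have h_pt := hs.norm_sub_sub_smul_le hV₀ (h_le _ ht) (ha' _ ht) le_rfl
  have h_sub : V (x₀ + h) - (c⁻¹ • L) h = c⁻¹ • ((J ‖h‖ (x₀ + h) - J ‖h‖ x₀ - L h)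
      - (J ‖h‖ (x₀ + h) - J ‖h‖ x₀ - c • V (x₀ + h))) := by
    rw [sub_sub_sub_cancel_left, smul_sub, inv_smul_smul₀ hc.ne', _root_.smul_apply]
  rw [h_sub, norm_smul, norm_inv, Real.norm_of_nonneg hc.le, mul_assoc, add_mul]
  gcongr
  exact (norm_sub_le _ _).trans (add_le_add (hL h hh₀ hh) (h_pt.trans_eq (by ring)))

end IsAveragingScheme

end AveragingScheme

section EllipticAverages

lemma IsHolderOn.norm_symPart_sub_le {E : Type*} [NormedAddCommGroup E] [InnerProductSpace ℝ E]
    [FiniteDimensional ℝ E] {A : E → E →L[ℝ] E} {x₀ : E} {M α r : ℝ}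
    (hA : IsHolderOn M α A (closedBall x₀ r)) (hM : 0 ≤ M) (hα : 0 ≤ α) {t : ℝ}
    (ht : t ∈ Set.Ioc 0 r) {y : E} (hy : y ∈ closedBall x₀ t) :
    ‖symPart (A y) - symPart (A x₀)‖ ≤ M * t ^ α := by
  calc ‖symPart (A y) - symPart (A x₀)‖ ≤ ‖A y - A x₀‖ := by
        rw [← symPart_sub]
        exact norm_symPart_le _
    _ ≤ M * ‖y - x₀‖ ^ α := hA y (closedBall_subset_closedBall ht.2 hy) x₀
        (mem_closedBall_self (ht.1.le.trans ht.2))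
    _ ≤ M * t ^ α := by
        gcongr
        exact mem_closedBall_iff_norm.1 hy

variable {E : Type*} [NormedAddCommGroup E] [InnerProductSpace ℝ E] [FiniteDimensional ℝ E]
  [MeasurableSpace E] [BorelSpace E]

lemma IsMeanZeroBump.flux_comp_sub_sub {F : Type*} [NormedAddCommGroup F] [NormedSpace ℝ F]
    [CompleteSpace F] {R : ℝ} {Θ : E → F} (hΘ : IsMeanZeroBump R Θ) {W : E → E} (hW : Continuous W)
    {t : ℝ} (ht : t ≠ 0) (y h : E) :
    flux (fun z => Θ (z - t⁻¹ • h) - Θ z - fderiv ℝ Θ z (-(t⁻¹ • h))) W t y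
      = flux Θ W t (y + h) - flux Θ W t y + t⁻¹ • flux (fderiv ℝ Θ) W t y h := by
  have hΘ_shift := hΘ.comp_sub_const (t⁻¹ • h)
  have hΘ_dir : IsMeanZeroBump R fun z => fderiv ℝ Θ z (-(t⁻¹ • h)) :=
    hΘ.fderiv.clm_comp (ContinuousLinearMap.apply ℝ F (-(t⁻¹ • h)))
  have hΘ₁ := contDiff_infty.1 hΘ.contDiff 1
  have hΘ_shift₁ := contDiff_infty.1 hΘ_shift.contDiff 1
  have h_dir : flux (fun z => fderiv ℝ Θ z (-(t⁻¹ • h))) W t y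
      = flux (fderiv ℝ Θ) W t y (-(t⁻¹ • h)) :=
    flux_clm_comp (ContinuousLinearMap.apply ℝ F (-(t⁻¹ • h)))
      (contDiff_infty.1 hΘ.fderiv.contDiff 1) hΘ.fderiv.hasCompactSupport hW t y
  rw [flux_sub (hΘ_shift₁.sub hΘ₁) (hΘ_shift.hasCompactSupport.sub hΘ.hasCompactSupport)
      (contDiff_infty.1 hΘ_dir.contDiff 1) hΘ_dir.hasCompactSupport hW,
    flux_sub hΘ_shift₁ hΘ_shift.hasCompactSupport hΘ₁ hΘ.hasCompactSupport hW,
    flux_comp_sub Θ W ht, h_dir, map_neg, map_smul, sub_neg_eq_add]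

variable {C α r : ℝ} {A : E → E →L[ℝ] E} {V : E → E} {x₀ : E}

lemma HasFrozenFluxBound.norm_flux_le_mul_rpow {F : Type*} [NormedAddCommGroup F]
    [NormedSpace ℝ F] [CompleteSpace F] (hflux : HasFrozenFluxBound C α r A V x₀) (hC : 0 ≤ C)
    (hr : 0 ≤ r) (hV : Continuous V) {Θ : E → F} {K : ℝ} (hΘ : IsMeanZeroBump 2 Θ)
    (hK : HasC1Bound K Θ) {t : ℝ} (ht : t ∈ Set.Ioc 0 r) {a : ℝ}
    (ha : ∀ x ∈ closedBall x₀ (3 * t), ‖V x‖ ≤ a * t) :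
    ‖flux Θ (fun y => A x₀ (V y)) t x₀‖ ≤ C * K * (a + 1) * t ^ (1 + α) := by
  refine (hflux.norm_flux_le hC hV (mem_closedBall_self hr) ht hΘ hK fun y hy =>
    ha y (closedBall_subset_closedBall (by linarith [ht.1]) hy)).trans_eq ?_
  rw [Real.rpow_add ht.1, Real.rpow_one]
  ring

lemma HasFrozenFluxBound.norm_sq_inv_smul_flux_fderiv_le
    (hflux : HasFrozenFluxBound C α r A V x₀) (hC : 0 ≤ C) (hr : 0 ≤ r) (hV : Continuous V)
    {Φ : E → E} (hΦ : IsMeanZeroBump 1 Φ) {K : ℝ} (hK : HasC1Bound K (fderiv ℝ Φ)) {t : ℝ}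
    (ht : t ∈ Set.Ioc 0 r) {a : ℝ} (ha : ∀ x ∈ closedBall x₀ (3 * t), ‖V x‖ ≤ a * t) :
    ‖(t⁻¹ ^ 2) • flux (fderiv ℝ Φ) (fun y => A x₀ (V y)) t x₀‖
      ≤ C * K * (a + 1) * t ^ (α - 1) := by
  have ht₀ := ht.1
  have h_split : t ^ (1 + α) = t ^ 2 * t ^ (α - 1) := by
    rw [← Real.rpow_natCast, ← Real.rpow_add ht₀]
    congr 1
    push_cast
    ring
  rw [norm_smul, Real.norm_of_nonneg (by positivity)]
  calc _ ≤ t⁻¹ ^ 2 * (C * K * (a + 1) * t ^ (1 + α)) := by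
        gcongr
        exact hflux.norm_flux_le_mul_rpow hC hr hV (hΦ.fderiv.mono one_le_two) hK ht ha
    _ = C * K * (a + 1) * t ^ (α - 1) := by rw [h_split]; field_simp

lemma HasFrozenFluxBound.norm_flux_increment_sub_le
    (hflux : HasFrozenFluxBound C α r A V x₀) (hC : 0 ≤ C) (hr : 0 ≤ r) (hV : Continuous V)
    {Φ : E → E} (hΦ : IsMeanZeroBump 1 Φ) {K : ℝ}
    (hK : ∀ w, HasC1Bound (K * ‖w‖ ^ 2) fun z => Φ (z - w) - Φ z - fderiv ℝ Φ z (-w)) {t : ℝ}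
    (ht : t ∈ Set.Ioc 0 r) {a : ℝ} (ha : ∀ x ∈ closedBall x₀ (3 * t), ‖V x‖ ≤ a * t) {h : E}
    (hh : ‖h‖ ≤ t) :
    ‖-t⁻¹ • (flux Φ (fun y => A x₀ (V y)) t (x₀ + h) - flux Φ (fun y => A x₀ (V y)) t x₀)
        - ((t⁻¹ ^ 2) • flux (fderiv ℝ Φ) (fun y => A x₀ (V y)) t x₀) h‖
      ≤ C * K * (a + 1) * ‖h‖ ^ 2 * t ^ (α - 2) := by
  have ht₀ := ht.1
  have h_norm : ‖t⁻¹ • h‖ = ‖h‖ / t := by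
    rw [norm_smul, norm_inv, Real.norm_of_nonneg ht₀.le, inv_mul_eq_div]
  have h_bump : IsMeanZeroBump 2
      fun z => Φ (z - t⁻¹ • h) - Φ z - fderiv ℝ Φ z (-(t⁻¹ • h)) := by
    refine (((hΦ.comp_sub_const _).mono ?_).sub (hΦ.mono one_le_two)).sub
      ((hΦ.fderiv.mono one_le_two).clm_comp (ContinuousLinearMap.apply ℝ E (-(t⁻¹ • h))))
    rw [h_norm]
    linarith [(div_le_one ht₀).2 hh]
  have h_flux := hflux.norm_flux_le_mul_rpow hC hr hV h_bump (hK _) ht ha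
  rw [hΦ.flux_comp_sub_sub (by fun_prop) ht₀.ne'] at h_flux
  have h_split : t ^ (1 + α) = t ^ 3 * t ^ (α - 2) := by
    rw [← Real.rpow_natCast, ← Real.rpow_add ht₀]
    congr 1
    push_cast
    ring
  have h_eq : ∀ v w : E, -t⁻¹ • v - (t⁻¹ ^ 2) • w = -t⁻¹ • (v + t⁻¹ • w) := fun v w => by module
  rw [_root_.smul_apply, h_eq, norm_smul, norm_neg, norm_inv, Real.norm_of_nonneg ht₀.le]
  calc _ ≤ t⁻¹ * (C * (K * ‖t⁻¹ • h‖ ^ 2) * (a + 1) * t ^ (1 + α)) := by gcongr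
    _ = C * K * (a + 1) * ‖h‖ ^ 2 * t ^ (α - 2) := by
      rw [h_norm, h_split]
      field_simp

lemma norm_kernelAverage_sub_integral_smul_le_of_kernel_sub {ψ ψ' : E → ℝ} {t ε B D : ℝ} {y : E}
    (hψ : Continuous ψ) (hψ_supp : tsupport ψ ⊆ closedBall 0 1) (hψ' : Continuous ψ')
    (hψ'_supp : tsupport ψ' ⊆ closedBall 0 1) (hV : Continuous V) (ht : 0 ≤ t)
    (h_sub : ∀ z, |ψ z - ψ' z| ≤ ε) (hB : ∀ x ∈ closedBall y t, ‖V x‖ ≤ B)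
    (h_le : ‖kernelAverage ψ V t y - (∫ z, ψ z) • V y‖ ≤ D) :
    ‖kernelAverage ψ' V t y - (∫ z, ψ' z) • V y‖
      ≤ D + 2 * (ε * B * volume.real (closedBall (0 : E) 1)) := by
  have h_scale := norm_kernelAverage_sub_kernelAverage_le hψ hψ_supp hψ' hψ'_supp hV ht h_sub hB
  have h_center := norm_kernelAverage_sub_kernelAverage_le hψ hψ_supp hψ' hψ'_supp hV le_rfl h_sub
    fun x hx => hB x (closedBall_subset_closedBall ht hx)
  rw [kernelAverage_zero, kernelAverage_zero] at h_center
  rw [norm_sub_rev] at h_scale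
  calc _ = ‖(kernelAverage ψ' V t y - kernelAverage ψ V t y)
          + (kernelAverage ψ V t y - (∫ z, ψ z) • V y)
          + ((∫ z, ψ z) • V y - (∫ z, ψ' z) • V y)‖ := by congr 1; abel
    _ ≤ _ := norm_add₃_le
    _ ≤ _ := by linarith

variable {U : E → ℝ}

lemma HasFrozenFluxBound.norm_kernelAverage_sub_le_mul_rpow
    (hflux : HasFrozenFluxBound C α r A (gradient U) x₀) (hC : 0 ≤ C) (hα : 0 < α)
    (hU : ContDiff ℝ 1 U) {t : ℝ} (ht : t ∈ Set.Ioc 0 r) {y : E} (hy : y ∈ closedBall x₀ t)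
    {ψ ψ' : E → ℝ} {Φ : E → E} (hk : IsAdaptedKernel (symPart (A y)) ψ Φ) {K : ℝ}
    (hK : HasC1Bound K Φ) (hψ' : Continuous ψ') (hψ'_supp : tsupport ψ' ⊆ closedBall 0 1) {D : ℝ}
    (hD : 0 ≤ D) (h_sub : ∀ z, |ψ z - ψ' z| ≤ D * t ^ α) {a : ℝ}
    (ha : ∀ x ∈ closedBall x₀ (3 * t), ‖gradient U x‖ ≤ a * t) :
    ‖kernelAverage ψ' (gradient U) t y - (∫ z, ψ' z) • gradient U y‖
      ≤ (C * K / α + 2 * (D * volume.real (closedBall (0 : E) 1))) * (a + 1) * t ^ (1 + α) := by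
  have ht₀ := ht.1
  have hB : ∀ x ∈ closedBall y (2 * t), ‖gradient U x‖ ≤ a * t := fun x hx =>
    ha x (closedBall_subset_closedBall' (by linarith [mem_closedBall.1 hy]) hx)
  have h_le := hflux.norm_kernelAverage_sub_le hC hα hU (closedBall_subset_closedBall ht.2 hy) hk
    hK ht hB
  refine (norm_kernelAverage_sub_integral_smul_le_of_kernel_sub hk.contDiff_kernel.continuous
    hk.tsupport_kernel_subset hψ' hψ'_supp (continuous_gradient_of_contDiff hU) ht₀.le h_sub
    (fun x hx => hB x (closedBall_subset_closedBall (by linarith) hx)) h_le).trans ?_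
  rw [Real.rpow_add ht₀, Real.rpow_one]
  have h_rest : 0 ≤ 2 * (D * volume.real (closedBall (0 : E) 1)) * (t * t ^ α) := by positivity
  linarith

variable {lam Lam M : ℝ} {ψ : (E →L[ℝ] E) → E → ℝ} {Φ : (E →L[ℝ] E) → E → E} {K K₁ K₂ C' : ℝ}

lemma HasFrozenFluxBound.isAveragingScheme_kernelAverage
    (hflux : HasFrozenFluxBound C α r A (gradient U) x₀) (hC : 0 ≤ C) (hr : 0 < r) (hα : 0 < α)
    (hU : ContDiff ℝ 1 U) (hell : ∀ y ∈ closedBall x₀ r, IsElliptic lam Lam (symPart (A y)))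
    (hM : 0 ≤ M) (hA : IsHolderOn M α A (closedBall x₀ r))
    (hk : ∀ Q, IsElliptic lam Lam Q → IsAdaptedKernel Q (ψ Q) (Φ Q))
    (hK : ∀ Q, IsElliptic lam Lam Q → HasC1Bound K (Φ Q))
    (h_sub : ∀ Q, IsElliptic lam Lam Q → ∀ Q', IsElliptic lam Lam Q' →
      ∀ z, |ψ Q z - ψ Q' z| ≤ K * ‖Q - Q'‖)
    (hK₁ : HasC1Bound K₁ (fderiv ℝ (Φ (symPart (A x₀)))))
    (hK₂ : ∀ w, HasC1Bound (K₂ * ‖w‖ ^ 2) fun z => Φ (symPart (A x₀)) (z - w)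
      - Φ (symPart (A x₀)) z - fderiv ℝ (Φ (symPart (A x₀))) z (-w))
    (hC₀ : C * K / α + 2 * (K * M * volume.real (closedBall (0 : E) 1)) ≤ C')
    (hC₁ : C * K₁ ≤ C') (hC₂ : C * K₂ ≤ C') :
    IsAveragingScheme C' α r (∫ z, ψ (symPart (A x₀)) z) (gradient U) x₀
      (kernelAverage (ψ (symPart (A x₀))) (gradient U))
      (fun t h => -t⁻¹ • (flux (Φ (symPart (A x₀))) (fun y => A x₀ (gradient U y)) t (x₀ + h)
        - flux (Φ (symPart (A x₀))) (fun y => A x₀ (gradient U y)) t x₀))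
      (fun t => (t⁻¹ ^ 2) • flux (fderiv ℝ (Φ (symPart (A x₀))))
        (fun y => A x₀ (gradient U y)) t x₀) := by
  have hV := continuous_gradient_of_contDiff hU
  have hQ := hell x₀ (mem_closedBall_self hr.le)
  set Q := symPart (A x₀)
  have hkQ := hk Q hQ
  have hK₀ := (hK Q hQ).nonneg
  have hΦ := hkQ.isMeanZeroBump
  have h_mono : ∀ {c t a β : ℝ}, c ≤ C' → t ∈ Set.Ioc 0 r →
      (∀ x ∈ closedBall x₀ (3 * t), ‖gradient U x‖ ≤ a * t) →
      c * (a + 1) * t ^ β ≤ C' * (a + 1) * t ^ β := by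
    intro c t a β hc ht ha
    have ht₀ := ht.1
    have ha₀ : 0 ≤ a := nonneg_of_mul_nonneg_left
      ((norm_nonneg _).trans (ha x₀ (mem_closedBall_self (by positivity)))) ht₀
    gcongr
  refine ⟨fun h t ht => ?_, ?_, fun t ht => ?_, fun t ht a ha y hy => ?_, fun t ht a ha => ?_,
    fun t ht a ha h hh => ?_⟩
  · rw [smul_sub]
    exact (hkQ.hasDerivAt_kernelAverage hU _ ht).sub (hkQ.hasDerivAt_kernelAverage hU _ ht)
  · exact ((continuousOn_inv₀.mono fun t ht => ht.ne').pow 2).smul (continuous_flux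
      (contDiff_infty.1 hΦ.fderiv.contDiff 1) hΦ.fderiv.hasCompactSupport (by fun_prop)
      x₀).continuousOn
  · exact exists_norm_kernelAverage_add_sub_le (contDiff_infty.1 hkQ.contDiff_kernel 2)
      hkQ.tsupport_kernel_subset hV ht x₀
  · have hQy := hell y (closedBall_subset_closedBall ht.2 hy)
    refine (hflux.norm_kernelAverage_sub_le_mul_rpow hC hα hU ht hy (hk _ hQy) (hK _ hQy)
      hkQ.contDiff_kernel.continuous hkQ.tsupport_kernel_subset (mul_nonneg hK₀ hM) (fun z => ?_)
      ha).trans (h_mono hC₀ ht ha)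
    rw [mul_assoc]
    exact (h_sub _ hQy Q hQ z).trans (by gcongr; exact hA.norm_symPart_sub_le hM hα.le ht hy)
  · exact (hflux.norm_sq_inv_smul_flux_fderiv_le hC hr.le hV hΦ hK₁ ht ha).trans (h_mono hC₁ ht ha)
  · refine (hflux.norm_flux_increment_sub_le hC hr.le hV hΦ hK₂ ht ha hh).trans ?_
    rw [mul_right_comm, mul_right_comm (C' * _)]
    exact mul_le_mul_of_nonneg_right (h_mono hC₂ ht ha) (sq_nonneg _)

theorem HasFrozenFluxBound.exists_isAveragingScheme
    (hflux : HasFrozenFluxBound C α r A (gradient U) x₀) (hC : 0 ≤ C) (hr : 0 < r) (hα : 0 < α)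
    (hU : ContDiff ℝ 1 U) (hlam : 0 < lam) (hLam : 0 < Lam)
    (hell : ∀ y ∈ closedBall x₀ r, IsElliptic lam Lam (symPart (A y)))
    (hM : 0 ≤ M) (hA : IsHolderOn M α A (closedBall x₀ r)) :
    ∃ (C' c : ℝ) (J g : ℝ → E → E) (g' : ℝ → E →L[ℝ] E), 0 ≤ C' ∧ 0 < c ∧
      IsAveragingScheme C' α r c (gradient U) x₀ J g g' := by
  obtain ⟨ψ, Φ, K, hfam⟩ := exists_adaptedKernel_family (E := E) hlam hLam
  obtain ⟨hk, hψ_pos, -, -⟩ := hfam _ (hell x₀ (mem_closedBall_self hr.le))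
  obtain ⟨K₁, hK₁⟩ := hk.isMeanZeroBump.fderiv.exists_hasC1Bound
  obtain ⟨K₂, hK₂⟩ := hk.isMeanZeroBump.exists_hasC1Bound_comp_sub_sub
  exact ⟨_, _, _, _, _, le_max_of_le_left (le_max_of_le_left (mul_nonneg hC hK₁.nonneg)), hψ_pos,
    hflux.isAveragingScheme_kernelAverage hC hr hα hU hell hM hA (fun Q hQ => (hfam Q hQ).1)
      (fun Q hQ => (hfam Q hQ).2.2.1) (fun Q hQ => (hfam Q hQ).2.2.2) hK₁ hK₂ (le_max_right _ _)
      ((le_max_left _ _).trans (le_max_left _ _)) ((le_max_right _ _).trans (le_max_left _ _))⟩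

end EllipticAverages

lemma IsHolderOn.continuousOn {E F : Type*} [SeminormedAddCommGroup E] [SeminormedAddCommGroup F]
    {M α : ℝ} {g : E → F} {s : Set E} (hg : IsHolderOn M α g s) (hα : 0 < α) :
    ContinuousOn g s := by
  have h_holder : HolderOnWith M.toNNReal α.toNNReal g s := fun x hx y hy => by
    rw [edist_dist, edist_dist, Real.coe_toNNReal α hα.le,
      ENNReal.ofReal_rpow_of_nonneg dist_nonneg hα.le, dist_eq_norm, dist_eq_norm]
    exact (ENNReal.ofReal_le_ofReal (hg x hx y hy)).trans_eq (ENNReal.ofReal_mul' (by positivity))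
  exact h_holder.continuousOn (Real.toNNReal_pos.2 hα)

lemma mul_norm_smul_rpow_le {E : Type*} [SeminormedAddCommGroup E] [NormedSpace ℝ E] {M α t : ℝ}
    (hM : 0 ≤ M) (hα : α ∈ Set.Ioo 0 1) (ht : 0 ≤ t) {z : E} (hz : z ∈ closedBall 0 2) :
    M * ‖t • z‖ ^ α ≤ 2 * M * t ^ α := by
  rw [mem_closedBall_zero_iff] at hz
  have hα₀ := hα.1
  calc M * ‖t • z‖ ^ α = M * (t ^ α * ‖z‖ ^ α) := by
        rw [norm_smul, Real.norm_of_nonneg ht, Real.mul_rpow ht (norm_nonneg z)]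
    _ ≤ M * (t ^ α * 2 ^ α) := by gcongr
    _ ≤ M * (t ^ α * 2 ^ (1 : ℝ)) := by
        gcongr
        exacts [one_le_two, hα.2.le]
    _ = 2 * M * t ^ α := by rw [Real.rpow_one]; ring

lemma closedBall_two_mul_subset_three_mul {E : Type*} [PseudoMetricSpace E] {x₀ x₁ : E} {t r : ℝ}
    (hx₁ : x₁ ∈ closedBall x₀ r) (ht : t ≤ r) :
    closedBall x₁ (2 * t) ⊆ closedBall x₀ (3 * r) :=
  closedBall_subset_closedBall' (by linarith [mem_closedBall.1 hx₁])

lemma self_add_smul_mem_closedBall {E : Type*} [NormedAddCommGroup E] [NormedSpace ℝ E]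
    (x : E) {z : E} {t R : ℝ} (ht : 0 ≤ t) (hz : z ∈ closedBall 0 R) :
    x + t • z ∈ closedBall x (R * t) := by
  simpa only [zero_add] using add_smul_mem_closedBall ht (mem_closedBall_self (x := x) le_rfl) hz

section BumpAt

variable {E : Type*} [NormedAddCommGroup E] [NormedSpace ℝ E]

/-- The test function obtained from `κ` by rescaling to scale `t` about the point `x₁`. -/
noncomputable def bumpAt (κ : E → ℝ) (x₁ : E) (t : ℝ) (x : E) : ℝ :=
  κ (t⁻¹ • (x - x₁))

variable {κ : E → ℝ} {x₁ : E} {t R : ℝ}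

lemma bumpAt_add_smul (ht : t ≠ 0) (z : E) : bumpAt κ x₁ t (x₁ + t • z) = κ z := by
  rw [bumpAt, add_sub_cancel_left, inv_smul_smul₀ ht]

lemma contDiff_bumpAt {m : ℕ∞} (hκ : ContDiff ℝ m κ) : ContDiff ℝ m (bumpAt κ x₁ t) :=
  hκ.comp (contDiff_const.smul (contDiff_id.sub contDiff_const))

lemma tsupport_bumpAt_subset (ht : 0 < t) (hκ : ∀ z ∉ closedBall (0 : E) R, κ z = 0) :
    tsupport (bumpAt κ x₁ t) ⊆ closedBall x₁ (R * t) := by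
  refine closure_minimal (fun x hx => ?_) isClosed_closedBall
  have h_mem : t⁻¹ • (x - x₁) ∈ closedBall (0 : E) R := by
    by_contra h_notMem
    exact hx (hκ _ h_notMem)
  rwa [mem_closedBall_zero_iff, norm_smul, norm_inv, Real.norm_of_nonneg ht.le,
    inv_mul_le_iff₀ ht, mul_comm, ← mem_closedBall_iff_norm] at h_mem

lemma bumpAt_eq_zero (ht : 0 < t) (hκ : ∀ z ∉ closedBall (0 : E) R, κ z = 0) {x : E}
    (hx : x ∉ closedBall x₁ (R * t)) : bumpAt κ x₁ t x = 0 :=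
  image_eq_zero_of_notMem_tsupport fun hx' => hx (tsupport_bumpAt_subset ht hκ hx')

lemma fderiv_bumpAt_add_smul_apply (hκ : Differentiable ℝ κ) (ht : t ≠ 0) (z w : E) :
    fderiv ℝ (bumpAt κ x₁ t) (x₁ + t • z) w = t⁻¹ * fderiv ℝ κ z w := by
  have h_affine : HasFDerivAt (fun x : E => t⁻¹ • (x - x₁)) (t⁻¹ • ContinuousLinearMap.id ℝ E)
      (x₁ + t • z) := ((hasFDerivAt_id _).sub_const x₁).const_smul t⁻¹
  have h_point : t⁻¹ • (x₁ + t • z - x₁) = z := by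
    rw [add_sub_cancel_left, inv_smul_smul₀ ht]
  have h_deriv : HasFDerivAt κ (fderiv ℝ κ z) (t⁻¹ • (x₁ + t • z - x₁)) := by
    rw [h_point]
    exact (hκ z).hasFDerivAt
  rw [show fderiv ℝ (bumpAt κ x₁ t) (x₁ + t • z) = _ from
    (h_deriv.comp (x₁ + t • z) h_affine).fderiv]
  simp

end BumpAt

section LocalEquation

variable {E : Type*} [NormedAddCommGroup E] [InnerProductSpace ℝ E] [FiniteDimensional ℝ E]
  [MeasurableSpace E] [BorelSpace E]

lemma integral_eq_smul_integral_comp_add_smul {F : Type*} [NormedAddCommGroup F] [NormedSpace ℝ F]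
    (f : E → F) (x₁ : E) {t : ℝ} (ht : 0 < t) :
    ∫ x, f x = t ^ Module.finrank ℝ E • ∫ z, f (x₁ + t • z) := by
  rw [Measure.integral_comp_smul volume (fun z => f (x₁ + z)) t,
    integral_add_left_eq_self f x₁, abs_of_pos (by positivity), smul_inv_smul₀ (by positivity)]

/-- The equation `div (A V) + ⟪b, V⟫ + G = 0` in weak form near `x₀`, for data with Hölder constant
`M`. The drift is controlled through its `L¹` norm, at the rate at which an `L^p` function with
`p ≥ n / (1 - α)` decays on small balls. -/
structure IsLocalWeakSolution (α M Cb r : ℝ) (A : E → E →L[ℝ] E) (b : E → E) (G : E → ℝ)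
    (V : E → E) (x₀ : E) : Prop where
  continuous : Continuous V
  isHolderOn_coeff : IsHolderOn M α A (closedBall x₀ (3 * r))
  isHolderOn_source : IsHolderOn M α G (closedBall x₀ (3 * r))
  integrableOn_drift : IntegrableOn b (closedBall x₀ (3 * r))
  integral_norm_drift_le : ∀ x₁ ∈ closedBall x₀ r, ∀ t ∈ Set.Ioc 0 r,
    ∫ x in closedBall x₁ (2 * t), ‖b x‖ ≤ Cb * t ^ ((Module.finrank ℝ E : ℝ) - 1 + α)
  weak_form : ∀ φ : E → ℝ, ContDiff ℝ (⊤ : ℕ∞) φ → tsupport φ ⊆ closedBall x₀ (3 * r) →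
    ∫ x, (⟪b x, V x⟫ + G x) * φ x = ∫ x, ⟪A x (V x), gradient φ x⟫

section TestFunction

variable {b V : E → E} {G φ : E → ℝ} {x₁ : E} {ρ B K : ℝ}

lemma integrable_inner_mul (hV : Continuous V) (hb : IntegrableOn b (closedBall x₁ ρ))
    (hφ : Continuous φ) (hφ_zero : ∀ x ∉ closedBall x₁ ρ, φ x = 0) :
    Integrable fun x => ⟪b x, V x⟫ * φ x := by
  obtain ⟨B, hB⟩ := (isCompact_closedBall x₁ ρ).exists_bound_of_continuousOn
    (hφ.smul hV : Continuous fun x => φ x • V x).continuousOn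
  refine (integrableOn_iff_integrable_of_support_subset (s := closedBall x₁ ρ)
    (Function.support_subset_iff'.2 fun x hx => by rw [hφ_zero x hx, mul_zero])).1 ?_
  refine (hb.norm.mul_const B).mono' ((hb.aestronglyMeasurable.inner
    hV.aestronglyMeasurable).mul hφ.aestronglyMeasurable) ?_
  filter_upwards [ae_restrict_mem isClosed_closedBall.measurableSet] with x hx
  rw [mul_comm, ← real_inner_smul_right]
  exact (norm_inner_le_norm _ _).trans (by gcongr; exact hB x hx)

lemma abs_integral_inner_mul_le (hb : IntegrableOn b (closedBall x₁ ρ))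
    (hφ_zero : ∀ x ∉ closedBall x₁ ρ, φ x = 0) (hφ : ∀ x, ‖φ x‖ ≤ K)
    (hB : ∀ x ∈ closedBall x₁ ρ, ‖V x‖ ≤ B) :
    |∫ x, ⟪b x, V x⟫ * φ x| ≤ B * K * ∫ x in closedBall x₁ ρ, ‖b x‖ := by
  have h_zero : ∀ x ∉ closedBall x₁ ρ, ⟪b x, V x⟫ * φ x = 0 := fun x hx => by
    rw [hφ_zero x hx, mul_zero]
  rw [← setIntegral_eq_integral_of_forall_compl_eq_zero h_zero, ← integral_const_mul,
    ← Real.norm_eq_abs]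
  refine norm_integral_le_of_norm_le (hb.norm.const_mul (B * K)) ?_
  filter_upwards [ae_restrict_mem isClosed_closedBall.measurableSet] with x hx
  calc ‖⟪b x, V x⟫ * φ x‖ ≤ ‖b x‖ * ‖V x‖ * ‖φ x‖ := by
        rw [norm_mul]
        gcongr
        exact norm_inner_le_norm _ _
    _ ≤ ‖b x‖ * B * K := by
        gcongr
        exacts [mul_nonneg (norm_nonneg _) ((norm_nonneg _).trans (hB x hx)), hB x hx, hφ x]
    _ = B * K * ‖b x‖ := by ring

lemma integrable_mul_of_continuousOn_closedBall (hG : ContinuousOn G (closedBall x₁ ρ))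
    (hφ : Continuous φ) (hφ_zero : ∀ x ∉ closedBall x₁ ρ, φ x = 0) :
    Integrable fun x => G x * φ x :=
  (integrableOn_iff_integrable_of_support_subset
    (Function.support_subset_iff'.2 fun x hx => by rw [hφ_zero x hx, mul_zero])).1
    ((hG.mul hφ.continuousOn).integrableOn_compact (isCompact_closedBall x₁ ρ))

end TestFunction

namespace IsLocalWeakSolution

variable {α M Cb r : ℝ} {A : E → E →L[ℝ] E} {b : E → E} {G : E → ℝ} {V : E → E} {x₀ x₁ : E}
  {t : ℝ} {κ : E → ℝ} {K B : ℝ}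

lemma abs_integral_source_mul_bumpAt_le (h : IsLocalWeakSolution α M Cb r A b G V x₀)
    (hM : 0 ≤ M) (hα : α ∈ Set.Ioo 0 1) (hx₁ : x₁ ∈ closedBall x₀ r) (ht : t ∈ Set.Ioc 0 r)
    (hκ : IsMeanZeroBump 2 κ) (hK : HasC1Bound K κ) :
    |∫ x, G x * bumpAt κ x₁ t x| ≤ t ^ Module.finrank ℝ E *
      (2 * M * t ^ α * K * volume.real (closedBall (0 : E) 2)) := by
  have ht₀ : 0 < t := ht.1
  have hsub := closedBall_two_mul_subset_three_mul hx₁ ht.2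
  have hG : ContinuousOn (fun z => G (x₁ + t • z)) (closedBall 0 2) :=
    (h.isHolderOn_source.continuousOn hα.1).comp (by fun_prop) fun z hz => hsub
      (self_add_smul_mem_closedBall x₁ ht₀.le hz)
  have h_oscillation : ∫ z, G (x₁ + t • z) * κ z = ∫ z, (G (x₁ + t • z) - G x₁) * κ z := by
    simp_rw [sub_mul]
    rw [integral_sub (integrable_mul_of_continuousOn_closedBall hG hκ.contDiff.continuous
      fun _ => hκ.eq_zero) (hκ.integrable.const_mul _), integral_const_mul, hκ.integral_eq_zero,
      mul_zero, sub_zero]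
  rw [integral_eq_smul_integral_comp_add_smul _ x₁ ht₀, smul_eq_mul, abs_mul,
    abs_of_pos (by positivity)]
  simp_rw [bumpAt_add_smul ht₀.ne']
  rw [h_oscillation, ← Real.norm_eq_abs]
  refine mul_le_mul_of_nonneg_left (norm_integral_le_of_norm_le_closedBall
    (fun z hz => by rw [hκ.eq_zero hz, mul_zero]) fun z hz => ?_) (by positivity)
  rw [norm_mul]
  gcongr
  · refine (h.isHolderOn_source _ (hsub (self_add_smul_mem_closedBall x₁ ht₀.le hz)) x₁
      (hsub (mem_closedBall_self (by positivity)))).trans ?_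
    rw [add_sub_cancel_left]
    exact mul_norm_smul_rpow_le hM hα ht₀.le hz
  · exact (hK z).1

lemma flux_eq (h : IsLocalWeakSolution α M Cb r A b G V x₀) (hα : 0 < α)
    (hx₁ : x₁ ∈ closedBall x₀ r) (ht : t ∈ Set.Ioc 0 r) (hκ : IsMeanZeroBump 2 κ) :
    flux κ (fun y => A y (V y)) t x₁ = t * (t ^ Module.finrank ℝ E)⁻¹ *
      ((∫ x, ⟪b x, V x⟫ * bumpAt κ x₁ t x) + ∫ x, G x * bumpAt κ x₁ t x) := by
  have ht₀ : 0 < t := ht.1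
  have hsub := closedBall_two_mul_subset_three_mul hx₁ ht.2
  have hφ : ContDiff ℝ (⊤ : ℕ∞) (bumpAt κ x₁ t) := contDiff_bumpAt hκ.contDiff
  have hφ_zero : ∀ x ∉ closedBall x₁ (2 * t), bumpAt κ x₁ t x = 0 := fun _ =>
    bumpAt_eq_zero ht₀ fun _ => hκ.eq_zero
  have h_weak := h.weak_form _ hφ
    ((tsupport_bumpAt_subset ht₀ fun _ => hκ.eq_zero).trans hsub)
  simp_rw [add_mul] at h_weak
  rw [integral_add
    (integrable_inner_mul h.continuous (h.integrableOn_drift.mono_set hsub) hφ.continuous hφ_zero)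
    (integrable_mul_of_continuousOn_closedBall
      ((h.isHolderOn_source.continuousOn hα).mono hsub) hφ.continuous hφ_zero),
    integral_eq_smul_integral_comp_add_smul (fun x => ⟪A x (V x), gradient _ x⟫) x₁ ht₀] at h_weak
  have h_scaled : ∫ z, ⟪A (x₁ + t • z) (V (x₁ + t • z)), gradient (bumpAt κ x₁ t) (x₁ + t • z)⟫
      = t⁻¹ * flux κ (fun y => A y (V y)) t x₁ := by
    rw [flux, ← integral_const_mul]
    congr! 2 with _
    rw [real_inner_comm, inner_gradient_left,
      fderiv_bumpAt_add_smul_apply (hκ.contDiff.differentiable (by simp)) ht₀.ne']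
  rw [h_weak, h_scaled, smul_eq_mul]
  field_simp

lemma abs_flux_le (h : IsLocalWeakSolution α M Cb r A b G V x₀) (hM : 0 ≤ M)
    (hα : α ∈ Set.Ioo 0 1) (hx₁ : x₁ ∈ closedBall x₀ r) (ht : t ∈ Set.Ioc 0 r)
    (hκ : IsMeanZeroBump 2 κ) (hK : HasC1Bound K κ) (hB : ∀ y ∈ closedBall x₁ (2 * t), ‖V y‖ ≤ B) :
    |flux κ (fun y => A y (V y)) t x₁|
      ≤ Cb * K * (t ^ α * B) + 2 * M * volume.real (closedBall (0 : E) 2) * K * (t ^ α * t) := by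
  have ht₀ : 0 < t := ht.1
  set n := Module.finrank ℝ E
  have hB₀ : 0 ≤ B := (norm_nonneg _).trans (hB x₁ (mem_closedBall_self (by positivity)))
  have h_drift : |∫ x, ⟪b x, V x⟫ * bumpAt κ x₁ t x| ≤ B * K * (Cb * t ^ ((n : ℝ) - 1 + α)) := by
    have hb := h.integrableOn_drift.mono_set (closedBall_two_mul_subset_three_mul hx₁ ht.2)
    refine (abs_integral_inner_mul_le hb (fun _ => bumpAt_eq_zero ht₀ fun _ => hκ.eq_zero)
      (fun x => (hK _).1) hB).trans ?_
    exact mul_le_mul_of_nonneg_left (h.integral_norm_drift_le x₁ hx₁ t ht)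
      (mul_nonneg hB₀ hK.nonneg)
  have h_power : t * (t ^ n)⁻¹ * t ^ ((n : ℝ) - 1 + α) = t ^ α := by
    rw [Real.rpow_add ht₀, Real.rpow_sub_one ht₀.ne', Real.rpow_natCast]
    field_simp
  rw [h.flux_eq hα.1 hx₁ ht hκ, abs_mul, abs_of_pos (by positivity)]
  calc _ ≤ t * (t ^ n)⁻¹ * (B * K * (Cb * t ^ ((n : ℝ) - 1 + α))
        + t ^ n * (2 * M * t ^ α * K * volume.real (closedBall (0 : E) 2))) := by
        gcongr
        exact (abs_add_le _ _).trans
          (add_le_add h_drift (h.abs_integral_source_mul_bumpAt_le hM hα hx₁ ht hκ hK))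
    _ = Cb * K * (t * (t ^ n)⁻¹ * t ^ ((n : ℝ) - 1 + α) * B)
        + 2 * M * volume.real (closedBall (0 : E) 2) * K * (t ^ α * t) * (t ^ n * (t ^ n)⁻¹) := by
        ring
    _ = _ := by rw [h_power, mul_inv_cancel₀ (by positivity), mul_one]

lemma abs_flux_frozen_sub_le (h : IsLocalWeakSolution α M Cb r A b G V x₀) (hM : 0 ≤ M)
    (hα : α ∈ Set.Ioo 0 1) (hx₁ : x₁ ∈ closedBall x₀ r) (ht : t ∈ Set.Ioc 0 r)
    (hκ : IsMeanZeroBump 2 κ) (hK : HasC1Bound K κ) (hB : ∀ y ∈ closedBall x₁ (2 * t), ‖V y‖ ≤ B) :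
    |flux κ (fun y => A x₁ (V y)) t x₁ - flux κ (fun y => A y (V y)) t x₁|
      ≤ K * (2 * M * t ^ α * B) * volume.real (closedBall (0 : E) 2) := by
  have ht₀ : 0 < t := ht.1
  have hsub := closedBall_two_mul_subset_three_mul hx₁ ht.2
  have hV := h.continuous
  have h_mem : ∀ z ∈ closedBall (0 : E) 2, x₁ + t • z ∈ closedBall x₁ (2 * t) := fun z hz =>
    self_add_smul_mem_closedBall x₁ ht₀.le hz
  have hκ₁ : ContDiff ℝ 1 κ := contDiff_infty.1 hκ.contDiff 1
  have h_integrable : Integrable fun z => fderiv ℝ κ z (A (x₁ + t • z) (V (x₁ + t • z))) := by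
    refine (integrableOn_iff_integrable_of_support_subset
      (Function.support_subset_iff'.2 fun z hz => ?_)).1
      (ContinuousOn.integrableOn_compact (isCompact_closedBall (0 : E) 2) ?_)
    · rw [hκ.fderiv_eq_zero hz, _root_.zero_apply]
    have hA : ContinuousOn (fun z => A (x₁ + t • z)) (closedBall (0 : E) 2) :=
      (h.isHolderOn_coeff.continuousOn hα.1).comp (by fun_prop) fun z hz => hsub (h_mem z hz)
    exact (hκ₁.continuous_fderiv one_ne_zero).continuousOn.clm_apply
      (hA.clm_apply (by fun_prop))
  rw [flux, flux, ← integral_sub (integrable_fderiv_apply_of_hasCompactSupport hκ₁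
    hκ.hasCompactSupport (by fun_prop)) h_integrable, ← Real.norm_eq_abs]
  refine norm_integral_le_of_norm_le_closedBall (fun z hz => ?_) fun z hz => ?_
  · rw [hκ.fderiv_eq_zero hz, _root_.zero_apply, _root_.zero_apply, sub_zero]
  rw [← map_sub, ← _root_.sub_apply]
  have hA : ‖A x₁ - A (x₁ + t • z)‖ ≤ 2 * M * t ^ α := by
    refine (h.isHolderOn_coeff x₁ (hsub (mem_closedBall_self (by positivity))) _
      (hsub (h_mem z hz))).trans ?_
    rw [sub_add_cancel_left, norm_neg]
    exact mul_norm_smul_rpow_le hM hα ht₀.le hz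
  exact (fderiv ℝ κ z).le_of_opNorm_le_of_le (hK z).2
    ((A x₁ - A (x₁ + t • z)).le_of_opNorm_le_of_le hA (hB _ (h_mem z hz)))

theorem hasFrozenFluxBound (h : IsLocalWeakSolution α M Cb r A b G V x₀) (hM : 0 ≤ M)
    (hCb : 0 ≤ Cb) (hα : α ∈ Set.Ioo 0 1) :
    HasFrozenFluxBound (2 * M * volume.real (closedBall (0 : E) 2) + Cb) α r A V x₀ := by
  intro x₁ hx₁ t ht κ K hκ hK B hB
  have ht₀ : 0 < t := ht.1
  have h_spare : 0 ≤ Cb * K * (t ^ α * t) := mul_nonneg (mul_nonneg hCb hK.nonneg) (by positivity)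
  have h_triangle := abs_add_le
    (flux κ (fun y => A x₁ (V y)) t x₁ - flux κ (fun y => A y (V y)) t x₁)
    (flux κ (fun y => A y (V y)) t x₁)
  rw [sub_add_cancel] at h_triangle
  linarith [h.abs_flux_frozen_sub_le hM hα hx₁ ht hκ hK hB, h.abs_flux_le hM hα hx₁ ht hκ hK hB]

end IsLocalWeakSolution

end LocalEquation

section Drift

lemma setIntegral_norm_le_eLpNorm_mul_rpow {X F : Type*} [MeasurableSpace X] {μ : Measure X}
    [NormedAddCommGroup F] {b : X → F} {p : ℝ} (hp : 1 ≤ p) {Ω s : Set X}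
    (hb : MemLp b (ENNReal.ofReal p) (μ.restrict Ω)) (hs : s ⊆ Ω) (hμs : μ s ≠ ∞) :
    ∫ x in s, ‖b x‖ ∂μ
      ≤ (eLpNorm b (ENNReal.ofReal p) (μ.restrict Ω)).toReal * μ.real s ^ (1 - 1 / p) := by
  have hb_s : AEStronglyMeasurable b (μ.restrict s) := hb.aestronglyMeasurable.mono_set hs
  have hp_exp : 0 ≤ 1 - 1 / p := sub_nonneg.2 (div_le_one_of_le₀ hp (by linarith))
  have h_holder := eLpNorm_le_eLpNorm_mul_rpow_measure_univ (ENNReal.one_le_ofReal.2 hp) hb_s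
  rw [ENNReal.toReal_one, ENNReal.toReal_ofReal (by linarith), Measure.restrict_apply_univ,
    one_div_one] at h_holder
  rw [integral_norm_eq_lintegral_enorm hb_s, ← eLpNorm_one_eq_lintegral_enorm, measureReal_def,
    ENNReal.toReal_rpow, ← ENNReal.toReal_mul]
  refine ENNReal.toReal_mono (ENNReal.mul_ne_top hb.eLpNorm_ne_top
    (ENNReal.rpow_ne_top_of_nonneg hp_exp hμs)) (h_holder.trans ?_)
  gcongr

lemma one_le_of_finrank_div_le {E : Type*} [AddCommGroup E] [Module ℝ E] [FiniteDimensional ℝ E]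
    [Nontrivial E] {p α : ℝ} (hα : α ∈ Set.Ioo 0 1)
    (hp : (Module.finrank ℝ E : ℝ) / (1 - α) ≤ p) : 1 ≤ p := by
  have hn : (1 : ℝ) ≤ Module.finrank ℝ E := by exact_mod_cast Module.finrank_pos
  exact ((one_le_div (sub_pos.2 hα.2)).2 (by linarith [hα.1])).trans hp

lemma exists_integral_norm_closedBall_le_rpow {E F : Type*} [NormedAddCommGroup E]
    [InnerProductSpace ℝ E] [FiniteDimensional ℝ E] [MeasurableSpace E] [BorelSpace E]
    [Nontrivial E] [NormedAddCommGroup F] {b : E → F} {Ω : Set E} {p α : ℝ} (hα : α ∈ Set.Ioo 0 1)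
    (hp : (Module.finrank ℝ E : ℝ) / (1 - α) ≤ p)
    (hb : MemLp b (ENNReal.ofReal p) (volume.restrict Ω)) :
    ∃ C, 0 ≤ C ∧ ∀ (x₁ : E), ∀ t ∈ Set.Ioc (0 : ℝ) 1, closedBall x₁ (2 * t) ⊆ Ω →
      ∫ x in closedBall x₁ (2 * t), ‖b x‖ ≤ C * t ^ ((Module.finrank ℝ E : ℝ) - 1 + α) := by
  set n := Module.finrank ℝ E
  have hp₁ : 1 ≤ p := one_le_of_finrank_div_le hα hp
  set N := (eLpNorm b (ENNReal.ofReal p) (volume.restrict Ω)).toReal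
  set v := volume.real (closedBall (0 : E) 2)
  refine ⟨N * v ^ (1 - 1 / p), by positivity, ?_⟩
  rintro x₁ t ⟨ht, ht₁⟩ hsub
  have h_volume : volume.real (closedBall x₁ (2 * t)) = t ^ n * v := by
    rw [mul_comm 2 t, measureReal_def, Measure.addHaar_closedBall_mul volume x₁ ht.le zero_le_two,
      ENNReal.toReal_mul, ENNReal.toReal_ofReal (by positivity), ← measureReal_def]
  have h_exponent : (n : ℝ) - 1 + α ≤ n * (1 - 1 / p) := by
    have h_div : (n : ℝ) / p ≤ 1 - α := by
      rw [div_le_iff₀ (by linarith), mul_comm]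
      rwa [div_le_iff₀ (sub_pos.2 hα.2)] at hp
    rw [mul_sub, mul_one_div]
    linarith
  calc ∫ x in closedBall x₁ (2 * t), ‖b x‖ ≤ N * (t ^ n * v) ^ (1 - 1 / p) :=
        h_volume ▸ setIntegral_norm_le_eLpNorm_mul_rpow hp₁ hb hsub measure_closedBall_lt_top.ne
    _ = N * v ^ (1 - 1 / p) * t ^ (n * (1 - 1 / p)) := by
        rw [Real.mul_rpow (by positivity) measureReal_nonneg, ← Real.rpow_natCast,
          ← Real.rpow_mul ht.le]
        ring
    _ ≤ N * v ^ (1 - 1 / p) * t ^ ((n : ℝ) - 1 + α) :=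
        mul_le_mul_of_nonneg_left (Real.rpow_le_rpow_of_exponent_ge ht ht₁ h_exponent)
          (by positivity)

end Drift

section HolderCalculus

namespace IsHolderOn

variable {E F : Type*} [SeminormedAddCommGroup E] {s : Set E} {M M' α : ℝ}

section Additive

variable [SeminormedAddCommGroup F] {g g' : E → F}

lemma mono (hg : IsHolderOn M α g s) (hM : M ≤ M') {s' : Set E} (hs : s' ⊆ s) :
    IsHolderOn M' α g s' := fun x hx y hy =>
  (hg x (hs hx) y (hs hy)).trans (mul_le_mul_of_nonneg_right hM (by positivity))

lemma sub (hg : IsHolderOn M α g s) (hg' : IsHolderOn M' α g' s) :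
    IsHolderOn (M + M') α (fun x => g x - g' x) s := fun x hx y hy => by
  rw [sub_sub_sub_comm, add_mul]
  exact (norm_sub_le _ _).trans (add_le_add (hg x hx y hy) (hg' x hx y hy))

end Additive

lemma mul [NonUnitalSeminormedRing F] {g g' : E → F} {B B' : ℝ} (hg : IsHolderOn M α g s)
    (hg' : IsHolderOn M' α g' s) (hB : ∀ x ∈ s, ‖g x‖ ≤ B) (hB' : ∀ x ∈ s, ‖g' x‖ ≤ B') :
    IsHolderOn (B * M' + M * B') α (fun x => g x * g' x) s := fun x hx y hy => by
  have h_left := mul_le_mul (hB x hx) (hg' x hx y hy) (norm_nonneg _)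
    ((norm_nonneg _).trans (hB x hx))
  have h_right := mul_le_mul (hg x hx y hy) (hB' y hy) (norm_nonneg _)
    ((norm_nonneg _).trans (hg x hx y hy))
  calc ‖g x * g' x - g y * g' y‖ = ‖g x * (g' x - g' y) + (g x - g y) * g' y‖ := by
        congr 1; noncomm_ring
    _ ≤ ‖g x‖ * ‖g' x - g' y‖ + ‖g x - g y‖ * ‖g' y‖ :=
        (norm_add_le _ _).trans (add_le_add (norm_mul_le _ _) (norm_mul_le _ _))
    _ ≤ (B * M' + M * B') * ‖x - y‖ ^ α := by linarith

end IsHolderOn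

lemma exists_isHolderOn_closedBall_of_contDiff {E F : Type*} [NormedAddCommGroup E]
    [NormedSpace ℝ E] [NormedAddCommGroup F] [NormedSpace ℝ F]
    {U : E → F} (hU : ContDiff ℝ 1 U) (hc : HasCompactSupport U) {α : ℝ} (hα : α ∈ Set.Ioo 0 1)
    (x₀ : E) {r : ℝ} : ∃ M, IsHolderOn M α U (closedBall x₀ r) := by
  obtain ⟨C, hC⟩ := hU.lipschitzWith_of_hasCompactSupport hc one_ne_zero
  refine ⟨C * (2 * r) ^ (1 - α), fun x hx y hy => ?_⟩
  have h_dist : ‖x - y‖ ≤ 2 * r := by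
    rw [← dist_eq_norm]
    linarith [dist_triangle_right x y x₀, mem_closedBall.1 hx, mem_closedBall.1 hy]
  have hα₁ : 0 ≤ 1 - α := sub_nonneg.2 hα.2.le
  calc ‖U x - U y‖ ≤ C * ‖x - y‖ := hC.norm_sub_le x y
    _ = C * ‖x - y‖ ^ (1 - α) * ‖x - y‖ ^ α := by
      rw [mul_assoc, ← Real.rpow_add_of_nonneg (norm_nonneg _) hα₁ hα.1.le, sub_add_cancel,
        Real.rpow_one]
    _ ≤ C * (2 * r) ^ (1 - α) * ‖x - y‖ ^ α := by gcongr

lemma exists_isHolderOn_mul_sub {E : Type*} [NormedAddCommGroup E] [NormedSpace ℝ E]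
    [FiniteDimensional ℝ E] {Ω : Set E} {c f U : E → ℝ} {x₀ : E} {α r : ℝ} (hα : α ∈ Set.Ioo 0 1)
    (hc : ∃ M, IsHolderOn M α c Ω) (hf : ∃ M, IsHolderOn M α f Ω) (hU : ContDiff ℝ 1 U)
    (hUc : HasCompactSupport U) (hball : closedBall x₀ r ⊆ Ω) :
    ∃ M, IsHolderOn M α (fun x => c x * U x - f x) (closedBall x₀ r) := by
  obtain ⟨Mc, hc⟩ := hc
  obtain ⟨Mf, hf⟩ := hf
  obtain ⟨MU, hU_holder⟩ := exists_isHolderOn_closedBall_of_contDiff hU hUc hα x₀ (r := r)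
  have hc_ball := hc.mono le_rfl hball
  obtain ⟨Bc, hBc⟩ := (isCompact_closedBall x₀ r).exists_bound_of_continuousOn
    (hc_ball.continuousOn hα.1)
  obtain ⟨BU, hBU⟩ := hUc.exists_bound_of_continuous hU.continuous
  exact ⟨_, (hc_ball.mul hU_holder hBc fun x _ => hBU x).sub (hf.mono le_rfl hball)⟩

end HolderCalculus

section Localization

lemma exists_contDiff_hasCompactSupport_eqOn_ball {E F : Type*} [NormedAddCommGroup E]
    [NormedSpace ℝ E] [HasContDiffBump E] [FiniteDimensional ℝ E] [NormedAddCommGroup F]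
    [NormedSpace ℝ F] {n : ℕ∞} {Ω : Set E} (hΩ : IsOpen Ω) {u : E → F} (hu : ContDiffOn ℝ n u Ω)
    {x₀ : E} (hx₀ : x₀ ∈ Ω) :
    ∃ (U : E → F) (R : ℝ), ContDiff ℝ n U ∧ HasCompactSupport U ∧ 0 < R ∧ ball x₀ R ⊆ Ω ∧
      Set.EqOn U u (ball x₀ R) := by
  obtain ⟨R, hR, hsub⟩ := nhds_basis_closedBall.mem_iff.1 (hΩ.mem_nhds hx₀)
  let η : ContDiffBump x₀ := ⟨R / 2, R, by positivity, by linarith⟩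
  refine ⟨fun x => η x • u x, R / 2,
    contMDiff_iff_contDiff.1 (contMDiff_of_tsupport fun x hx => ?_),
    η.hasCompactSupport.smul_right, by positivity, fun x hx => ?_, fun x hx => ?_⟩
  · rw [contMDiffAt_iff_contDiffAt]
    have hx_ball : x ∈ closedBall x₀ R := η.tsupport_eq ▸ tsupport_smul_subset_left _ _ hx
    exact η.contDiffAt.smul (hu.contDiffAt (hΩ.mem_nhds (hsub hx_ball)))
  · exact hsub (closedBall_subset_closedBall (by linarith) (ball_subset_closedBall hx))
  · simp only [η.one_of_mem_closedBall (ball_subset_closedBall hx), one_smul]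

lemma hasFDerivAt_of_norm_sub_le_rpow {E F : Type*} [NormedAddCommGroup E] [NormedSpace ℝ E]
    [NormedAddCommGroup F] [NormedSpace ℝ F] {V : E → F} {L : E →L[ℝ] F} {x₀ : E} {C α ρ : ℝ}
    (hα : 0 < α) (hρ : 0 < ρ)
    (hV : ∀ h, ‖h‖ ≤ ρ → ‖V (x₀ + h) - V x₀ - L h‖ ≤ C * ‖h‖ ^ (1 + α)) :
    HasFDerivAt V L x₀ := by
  rw [hasFDerivAt_iff_isLittleO_nhds_zero]
  have h_bigO : (fun h => V (x₀ + h) - V x₀ - L h) =O[𝓝 0] fun h => ‖h‖ ^ α * ‖h‖ := by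
    refine Asymptotics.IsBigO.of_bound C ?_
    filter_upwards [closedBall_mem_nhds 0 hρ] with h hh
    rw [Real.norm_of_nonneg (by positivity), mul_comm (‖h‖ ^ α),
      ← Real.rpow_one_add' (norm_nonneg h) (by linarith)]
    exact hV h (mem_closedBall_zero_iff.1 hh)
  have h_tendsto : Tendsto (fun h : E => ‖h‖ ^ α) (𝓝 0) (𝓝 0) := by
    have h_cont : Continuous fun h : E => ‖h‖ ^ α :=
      continuous_norm.rpow_const fun _ => Or.inr hα.le
    simpa only [norm_zero, Real.zero_rpow hα.ne'] using h_cont.tendsto 0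
  have h_littleO : (fun h : E => ‖h‖ ^ α) =o[𝓝 0] fun _ => (1 : ℝ) :=
    (Asymptotics.isLittleO_one_iff ℝ).2 h_tendsto
  refine h_bigO.trans_isLittleO (Asymptotics.isLittleO_norm_right.1 ?_)
  simpa only [one_mul] using
    h_littleO.mul_isBigO (Asymptotics.isBigO_refl (fun h : E => ‖h‖) (𝓝 0))

variable {E : Type*} [NormedAddCommGroup E] [InnerProductSpace ℝ E] [FiniteDimensional ℝ E]
  [MeasurableSpace E] [BorelSpace E]

/-- Weak solutions `u` of `div (A Du) + ⟪b, Du⟫ + c u = f` in `Ω`, in a coordinate-free Euclidean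
space. -/
def IsWeakSolution (Ω : Set E) (A : E → E →L[ℝ] E) (b : E → E) (c f u : E → ℝ) : Prop :=
  ∀ φ : E → ℝ, ContDiff ℝ (⊤ : ℕ∞) φ → HasCompactSupport φ → tsupport φ ⊆ Ω →
    ∫ x in Ω, (⟪b x, gradient u x⟫ + c x * u x - f x) * φ x
      = ∫ x in Ω, ⟪A x (gradient u x), gradient φ x⟫

variable {Ω s : Set E} {A : E → E →L[ℝ] E} {b : E → E} {c f u U : E → ℝ} {x₀ : E} {lam α r : ℝ}

lemma IsWeakSolution.integral_eq_of_eqOn (h : IsWeakSolution Ω A b c f u) (hs : IsOpen s)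
    (hsΩ : s ⊆ Ω) (hUu : Set.EqOn U u s) {φ : E → ℝ} (hφ : ContDiff ℝ (⊤ : ℕ∞) φ)
    (hφc : HasCompactSupport φ) (hφs : tsupport φ ⊆ s) :
    ∫ x, (⟪b x, gradient U x⟫ + (c x * U x - f x)) * φ x
      = ∫ x, ⟪A x (gradient U x), gradient φ x⟫ := by
  have hφ_zero : ∀ x ∉ s, φ x = 0 := fun x hx =>
    image_eq_zero_of_notMem_tsupport fun hx' => hx (hφs hx')
  have hφ'_zero : ∀ x ∉ s, gradient φ x = 0 := fun x hx => by
    rw [gradient, fderiv_of_notMem_tsupport ℝ fun hx' => hx (hφs hx'), map_zero]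
  have h_grad : ∀ x ∈ s, gradient U x = gradient u x := fun x hx =>
    (hUu.eventuallyEq_of_mem (hs.mem_nhds hx)).gradient_eq
  have h_weak := h φ hφ hφc (hφs.trans hsΩ)
  rw [setIntegral_eq_integral_of_forall_compl_eq_zero fun x hx => by
      rw [hφ_zero x fun hx' => hx (hsΩ hx'), mul_zero],
    setIntegral_eq_integral_of_forall_compl_eq_zero fun x hx => by
      rw [hφ'_zero x fun hx' => hx (hsΩ hx'), inner_zero_right]] at h_weak
  convert h_weak using 3 with x x
  · by_cases hx : x ∈ s
    · rw [h_grad x hx, hUu hx, add_sub_assoc]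
    · rw [hφ_zero x hx, mul_zero, mul_zero]
  · by_cases hx : x ∈ s
    · rw [h_grad x hx]
    · rw [hφ'_zero x hx, inner_zero_right, inner_zero_right]

lemma IsWeakSolution.exists_isLocalWeakSolution [Nontrivial E] (h : IsWeakSolution Ω A b c f u)
    (hα : α ∈ Set.Ioo 0 1) (hA : ∃ M, IsHolderOn M α A Ω) {p : ℝ}
    (hp : (Module.finrank ℝ E : ℝ) / (1 - α) ≤ p)
    (hb : MemLp b (ENNReal.ofReal p) (volume.restrict Ω)) (hc : ∃ M, IsHolderOn M α c Ω)
    (hf : ∃ M, IsHolderOn M α f Ω) (hU : ContDiff ℝ 1 U) (hUc : HasCompactSupport U)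
    (hs : IsOpen s) (hsΩ : s ⊆ Ω) (hUu : Set.EqOn U u s) (hr : r ∈ Set.Ioc 0 1)
    (hball : closedBall x₀ (3 * r) ⊆ s) :
    ∃ M Cb, 0 ≤ M ∧ 0 ≤ Cb ∧
      IsLocalWeakSolution α M Cb r A b (fun x => c x * U x - f x) (gradient U) x₀ := by
  have hballΩ : closedBall x₀ (3 * r) ⊆ Ω := hball.trans hsΩ
  obtain ⟨MA, hA⟩ := hA
  obtain ⟨MG, hG⟩ := exists_isHolderOn_mul_sub hα hc hf hU hUc hballΩ
  obtain ⟨Cb, hCb, h_drift⟩ := exists_integral_norm_closedBall_le_rpow hα hp hb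
  have hb_ball : MemLp b (ENNReal.ofReal p) (volume.restrict (closedBall x₀ (3 * r))) :=
    hb.mono_measure (Measure.restrict_mono_set _ hballΩ)
  have : IsFiniteMeasure (volume.restrict (closedBall x₀ (3 * r))) :=
    isFiniteMeasure_restrict.2 measure_closedBall_lt_top.ne
  exact ⟨max (max MA MG) 0, Cb, le_max_right _ _, hCb,
    { continuous := continuous_gradient_of_contDiff hU
      isHolderOn_coeff := hA.mono (by simp) hballΩ
      isHolderOn_source := hG.mono (by simp) le_rfl
      integrableOn_drift :=
        hb_ball.integrable (ENNReal.one_le_ofReal.2 (one_le_of_finrank_div_le hα hp))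
      integral_norm_drift_le := fun x₁ hx₁ t ht => h_drift x₁ t ⟨ht.1, ht.2.trans hr.2⟩
        ((closedBall_two_mul_subset_three_mul hx₁ ht.2).trans hballΩ)
      weak_form := fun φ hφ hφs => h.integral_eq_of_eqOn hs hsΩ hUu hφ
        ((isCompact_closedBall x₀ (3 * r)).of_isClosed_subset (isClosed_tsupport φ) hφs)
        (hφs.trans hball) }⟩

lemma IsLocalWeakSolution.exists_norm_gradient_sub_clm_le_rpow {M Cb : ℝ} {G : E → ℝ}
    (h : IsLocalWeakSolution α M Cb r A b G (gradient U) x₀) (hM : 0 ≤ M) (hCb : 0 ≤ Cb)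
    (hα : α ∈ Set.Ioo 0 1) (hr : 0 < r) (hlam : 0 < lam)
    (hell : ∀ y ∈ closedBall x₀ r, ∀ v, lam * ‖v‖ ^ 2 ≤ ⟪A y v, v⟫) (hU : ContDiff ℝ 1 U)
    (hcrit : gradient U x₀ = 0) :
    ∃ ρ > 0, ∃ (L : E →L[ℝ] E) (C : ℝ), ∀ h, ‖h‖ ≤ ρ →
      ‖gradient U (x₀ + h) - L h‖ ≤ C * ‖h‖ ^ (1 + α) := by
  have hsub : closedBall x₀ r ⊆ closedBall x₀ (3 * r) :=
    closedBall_subset_closedBall (by linarith)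
  have hA : IsHolderOn M α A (closedBall x₀ r) := h.isHolderOn_coeff.mono le_rfl hsub
  obtain ⟨Lam, hLam⟩ := (isCompact_closedBall x₀ r).exists_bound_of_continuousOn
    (hA.continuousOn hα.1)
  have h_elliptic : ∀ y ∈ closedBall x₀ r, IsElliptic lam (max Lam 1) (symPart (A y)) :=
    fun y hy => isElliptic_symPart (hell y hy) ((hLam y hy).trans (le_max_left _ _))
  obtain ⟨C, c, J, g, g', hC, hc, h_scheme⟩ :=
    (h.hasFrozenFluxBound hM hCb hα).exists_isAveragingScheme (by positivity) hr hα.1 hU hlam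
      (by positivity) h_elliptic hM hA
  obtain ⟨B, hB⟩ := (isCompact_closedBall x₀ (3 * r)).exists_bound_of_continuousOn
    h.continuous.continuousOn
  exact h_scheme.exists_norm_sub_clm_le_rpow hC hα hc hr hcrit hB

end Localization

theorem stmt1_general {E : Type*} [NormedAddCommGroup E] [InnerProductSpace ℝ E]
    [FiniteDimensional ℝ E] [MeasurableSpace E] [BorelSpace E] [Nontrivial E] {Ω : Set E}
    (hΩo : IsOpen Ω) {lam : ℝ} (hlam : 0 < lam) {α : ℝ} (hα : α ∈ Set.Ioo (0 : ℝ) 1)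
    {A : E → E →L[ℝ] E} {b : E → E} {c f : E → ℝ}
    (hell : ∀ x ∈ Ω, ∀ ξ, lam * ‖ξ‖ ^ 2 ≤ ⟪A x ξ, ξ⟫) (hA : ∃ M, IsHolderOn M α A Ω)
    {p : ℝ} (hp : (Module.finrank ℝ E : ℝ) / (1 - α) ≤ p)
    (hb : MemLp b (ENNReal.ofReal p) (volume.restrict Ω))
    (hc : ∃ M, IsHolderOn M α c Ω) (hf : ∃ M, IsHolderOn M α f Ω)
    {u : E → ℝ} (hu : ContDiffOn ℝ 1 u Ω) (hsol : IsWeakSolution Ω A b c f u)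
    {x₀ : E} (hx₀ : x₀ ∈ Ω) (hcrit : gradient u x₀ = 0) :
    DifferentiableAt ℝ (gradient u) x₀ ∧
    ∃ C : ℝ, 0 < C ∧ ∃ δ : ℝ, 0 < δ ∧
      ∀ x : E, ‖x - x₀‖ < δ →
        ‖gradient u x - fderiv ℝ (gradient u) x₀ (x - x₀)‖ ≤ C * ‖x - x₀‖ ^ (1 + α) := by
  obtain ⟨U, R, hU, hUc, hR, hRΩ, hUu⟩ := exists_contDiff_hasCompactSupport_eqOn_ball hΩo hu hx₀
  have hr : min (R / 4) 1 ∈ Set.Ioc 0 1 := ⟨by positivity, min_le_right _ _⟩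
  have hball : closedBall x₀ (3 * min (R / 4) 1) ⊆ ball x₀ R :=
    closedBall_subset_ball (by linarith [min_le_left (R / 4) 1])
  have h_grad : gradient U =ᶠ[𝓝 x₀] gradient u :=
    (hUu.eventuallyEq_of_mem (ball_mem_nhds x₀ hR)).gradient
  obtain ⟨M, Cb, hM, hCb, h_local⟩ := hsol.exists_isLocalWeakSolution hα hA hp hb hc hf hU hUc
    isOpen_ball hRΩ hUu hr hball
  have hsub : closedBall x₀ (min (R / 4) 1) ⊆ Ω :=
    (closedBall_subset_closedBall (by linarith [hr.1])).trans (hball.trans hRΩ)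
  obtain ⟨ρ, hρ, L, C, h_taylor⟩ := h_local.exists_norm_gradient_sub_clm_le_rpow hM hCb hα hr.1
    hlam (fun y hy => hell y (hsub hy)) hU (h_grad.eq_of_nhds.trans hcrit)
  have h_deriv : HasFDerivAt (gradient u) L x₀ :=
    (hasFDerivAt_of_norm_sub_le_rpow hα.1 hρ (by
      simpa only [h_grad.eq_of_nhds, hcrit, sub_zero] using h_taylor)).congr_of_eventuallyEq
      h_grad.symm
  obtain ⟨δ, hδ, h_near⟩ :=
    Metric.eventually_nhds_iff.1 (h_grad.and (closedBall_mem_nhds x₀ hρ))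
  refine ⟨h_deriv.differentiableAt, max C 1, by positivity, δ, hδ, fun x hx => ?_⟩
  obtain ⟨h_eq, hxρ⟩ := h_near (by rwa [dist_eq_norm])
  have h_bound := h_taylor (x - x₀) (mem_closedBall_iff_norm.1 hxρ)
  rw [add_sub_cancel, h_eq] at h_bound
  rw [h_deriv.fderiv]
  exact h_bound.trans (by gcongr; exact le_max_left _ _)

/-- `C^{2,α}` regularity at critical points for divergence-form equations
with `C^α` coefficients. -/
theorem stmt1 {d : ℕ} (hd : 2 ≤ d) (Ω : Set (Euc d)) (hΩo : IsOpen Ω) (hΩc : IsConnected Ω)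
    (lam Lam : ℝ) (hlam : 0 < lam) (hLam : 0 < Lam)
    (α : ℝ) (hα : α ∈ Set.Ioo (0 : ℝ) 1)
    (A : Euc d → Euc d →L[ℝ] Euc d) (b : Euc d → Euc d) (c f : Euc d → ℝ)
    (hell : ∀ x ∈ Ω, ∀ ξ : Euc d, lam * ‖ξ‖ ^ 2 ≤ ⟪A x ξ, ξ⟫)
    (hAbd : ∀ x ∈ Ω, ∀ ξ η : Euc d, |⟪A x ξ, η⟫| ≤ Lam * ‖ξ‖ * ‖η‖)
    (hAH : HolderOnE A α Ω)
    (p : ℝ) (hp : (d : ℝ) / (1 - α) ≤ p)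
    (hb : MemLp b (ENNReal.ofReal p) (volume.restrict Ω))
    (hcH : HolderOnE c α Ω) (hfH : HolderOnE f α Ω)
    (u : Euc d → ℝ) (hu : ContDiffOn ℝ 1 u Ω)
    (hsol : IsWeakSolDiv Ω A b c f u)
    (x₀ : Euc d) (hx₀ : x₀ ∈ Ω) (hcrit : gradient u x₀ = 0) :
    DifferentiableAt ℝ (gradient u) x₀ ∧
    ∃ C : ℝ, 0 < C ∧ ∃ δ : ℝ, 0 < δ ∧
      ∀ x : Euc d, ‖x - x₀‖ < δ →
        ‖gradient u x - fderiv ℝ (gradient u) x₀ (x - x₀)‖ ≤ C * ‖x - x₀‖ ^ (1 + α) := by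
  have : Nontrivial (Euc d) := Module.nontrivial_of_finrank_pos (R := ℝ) (by simp; omega)
  exact stmt1_general hΩo hlam hα hell hAH (by rwa [finrank_euclideanSpace_fin]) hb hcH hfH hu
    hsol hx₀ hcrit
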